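/- There exists a residual subset R of the metric space (F_(C,β), d_α) such that for every f ∈ R, for μ̂-almost every y ∈ [0,1] the conditional measure μ_y is mutually singular with the leaf measure λ_y, defined as the pushforward of one-dimensional Lebesgue measure on [0,1] under x ↦ (x, f(x,y)); in particular, it is not the case that μ_y is absolutely continuous with respect to λ_y for μ̂-a.e. y, so the foliation P_f is not leafwise absolutely continuous. -/

import Mathlib

open MeasureTheory Set Filter Topology
open scoped ENNReal

noncomputable section

/-- The unit square `M = [0,1]²`. -/
def MSq : Set (ℝ × ℝ) := unitInterval ×ˢ unitInterval

/-- Lower `(C,γ)`-bi-Hölder bound in the second variable. -/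
def BiHolderLower (C γ : ℝ) (f : ℝ → ℝ → ℝ) : Prop :=
  ∀ x ∈ unitInterval, ∀ y₁ ∈ unitInterval, ∀ y₂ ∈ unitInterval, y₁ ≠ y₂ →
    C⁻¹ * |y₂ - y₁| ^ (1 / γ) ≤ |f x y₂ - f x y₁|

/-- Upper `(C,γ)`-Hölder bound in the second variable. -/
def BiHolderUpper (C γ : ℝ) (f : ℝ → ℝ → ℝ) : Prop :=
  ∀ x ∈ unitInterval, ∀ y₁ ∈ unitInterval, ∀ y₂ ∈ unitInterval, y₁ ≠ y₂ →
    |f x y₂ - f x y₁| ≤ C * |y₂ - y₁| ^ γ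

/-- Membership in the space `F_(C,γ)`: conditions (i)–(iv); `fx` plays the role of `∂f/∂x`. -/
structure IsFol (C γ : ℝ) (f fx : ℝ → ℝ → ℝ) : Prop where
  mapsTo : ∀ x ∈ unitInterval, ∀ y ∈ unitInterval, f x y ∈ unitInterval
  hasDeriv : ∀ y ∈ unitInterval, ∀ x ∈ unitInterval,
    HasDerivWithinAt (fun x' => f x' y) (fx x y) unitInterval x
  derivCont : ContinuousOn (fun p : ℝ × ℝ => fx p.1 p.2) MSq
  eq_id : ∀ y ∈ unitInterval, f 0 y = y
  eq_bot : ∀ x ∈ unitInterval, f x 0 = 0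
  eq_top : ∀ x ∈ unitInterval, f x 1 = 1
  lower : BiHolderLower C γ f
  upper : BiHolderUpper C γ f

/-- The space `F_(C,γ)`. -/
structure Fol (C γ : ℝ) where
  f : ℝ → ℝ → ℝ
  fx : ℝ → ℝ → ℝ
  isFol : IsFol C γ f fx

/-- The inverse of `y ↦ f x y` on `[0,1]`, i.e. the holonomy `h^f_{x,0}`. -/
def hinv (f : ℝ → ℝ → ℝ) (x : ℝ) : ℝ → ℝ := Function.invFunOn (f x) unitInterval

/-- The `C⁰` distance over the square. -/
def C0dist (u v : ℝ → ℝ → ℝ) : ℝ :=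
  sSup {r | ∃ x ∈ unitInterval, ∃ y ∈ unitInterval, r = |u x y - v x y|}

/-- The `α`-Hölder seminorm of the difference `h - k` on `[0,1]`. -/
def holDist (α : ℝ) (h k : ℝ → ℝ) : ℝ :=
  sSup {r | ∃ y₁ ∈ unitInterval, ∃ y₂ ∈ unitInterval, y₁ ≠ y₂ ∧
    r = |(h y₂ - k y₂) - (h y₁ - k y₁)| / |y₂ - y₁| ^ α}

/-- The distance `d_α`, on raw data `(f, ∂f/∂x)`, `(g, ∂g/∂x)`. -/
def dalpha (α : ℝ) (f fx g gx : ℝ → ℝ → ℝ) : ℝ :=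
  C0dist f g + C0dist fx gx +
    sSup {r | ∃ x ∈ unitInterval,
      r = max (holDist α (f x) (g x)) (holDist α (hinv f x) (hinv g x))}

/-- The distance `d_α` on `F_(C,γ)`. -/
def dalphaF {C γ : ℝ} (α : ℝ) (F G : Fol C γ) : ℝ := dalpha α F.f F.fx G.f G.fx

/-- Openness with respect to a distance function. -/
def IsOpenWrt {X : Type*} (d : X → X → ℝ) (s : Set X) : Prop :=
  ∀ f ∈ s, ∃ ε > 0, ∀ g, d g f < ε → g ∈ s

/-- Density with respect to a distance function. -/
def IsDenseWrt {X : Type*} (d : X → X → ℝ) (s : Set X) : Prop :=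
  ∀ f : X, ∀ ε > 0, ∃ g ∈ s, d g f < ε

/-- Lebesgue measure `μ` on the unit square `M`. -/
def muM : Measure (ℝ × ℝ) := volume.restrict MSq

/-- The projection `π_f(x,z) = f(x,·)⁻¹(z)` along the leaves. -/
def projF (f : ℝ → ℝ → ℝ) : ℝ × ℝ → ℝ := fun p => hinv f p.1 p.2

/-- The quotient measure `μ̂ = (π_f)_* μ`. -/
def quotM {C γ : ℝ} (F : Fol C γ) : Measure ℝ := muM.map (projF F.f)

/-- The leaf `L_y = {(x, f(x,y)) : x ∈ [0,1]}`. -/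
def Leaf {C γ : ℝ} (F : Fol C γ) (y : ℝ) : Set (ℝ × ℝ) :=
  (fun x => (x, F.f x y)) '' unitInterval

/-- `(ν_y)` is a Rokhlin disintegration of Lebesgue measure on the square w.r.t. `π_f`. -/
def IsDisint {C γ : ℝ} (F : Fol C γ) (ν : ℝ → Measure (ℝ × ℝ)) : Prop :=
  (∀ y, IsProbabilityMeasure (ν y)) ∧
  (∀ E : Set (ℝ × ℝ), MeasurableSet E → Measurable fun y => ν y E) ∧
  (∀ᵐ y ∂quotM F, ν y (Leaf F y) = 1) ∧
  (∀ E : Set (ℝ × ℝ), MeasurableSet E → muM E = ∫⁻ y, ν y E ∂quotM F)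

/-- The element `P_i` of the partition `P_{f,n}`. -/
def Pelt (f : ℝ → ℝ → ℝ) (n i : ℕ) : Set (ℝ × ℝ) :=
  {p | p.1 ∈ unitInterval ∧ f p.1 ((i : ℝ) / 2 ^ n) ≤ p.2 ∧ p.2 < f p.1 (((i : ℝ) + 1) / 2 ^ n)}

/-- `Ĩ = [b₁,b₂] × [0,1]`. -/
def Itilde (b₁ b₂ : ℝ) : Set (ℝ × ℝ) := Icc b₁ b₂ ×ˢ unitInterval

/-- The set `A_{n,m,I}`. -/
def Aset (C γ : ℝ) (n m : ℕ) (b₁ b₂ : ℝ) : Set (Fol C γ) :=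
  {F | ∀ i < 2 ^ n,
    muM (Pelt F.f n i ∩ Itilde b₁ b₂) / muM (Pelt F.f n i) < 1 / (m : ℝ≥0∞) ∨
    1 - 1 / (m : ℝ≥0∞) < muM (Pelt F.f n i ∩ Itilde b₁ b₂) / muM (Pelt F.f n i)}

/-- The set `B_{m,I}`. -/
def Bset (C γ : ℝ) (m : ℕ) (b₁ b₂ : ℝ) : Set (Fol C γ) := ⋃ n : ℕ, Aset C γ n m b₁ b₂

/-- The leaf measure `λ_y`: pushforward of 1-dimensional Lebesgue measure on `[0,1]`
under `x ↦ (x, f(x,y))`. -/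
def leafMeas {C γ : ℝ} (F : Fol C γ) (y : ℝ) : Measure (ℝ × ℝ) :=
  (volume.restrict unitInterval).map fun x => (x, F.f x y)

/-!
Given a foliation, first flatten it slightly and replace it by one that is piecewise affine, hence
bi-Lipschitz, in `y`. Cut it into `N` thick strips of leaves and each of these into `K` thin ones,
and let the `q`-th thin strip of every thick strip swell over `[q / K, (q + 1) / K]` until it fills
almost all of it. As `N → ∞` with `K` fixed, this perturbation is small in `C¹`, and as the new
foliation is still Lipschitz with constants independent of `N`, the Hölder constraints survive and
the perturbation is small in `d_α` as well. The new foliation admits a set of almost full area (the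
swollen thin strips) that each leaf meets only over an interval of length `1 / K`. This property is
open, so generically it holds at every scale `2⁻ⁿ`, and by Borel–Cantelli the limit superior of the
complements is a null set, hence null for almost every conditional measure, which carries
the full measure of every leaf.
-/

section

open scoped unitInterval

/-! ### Piecewise affine interpolation -/

section Increments

variable {g φ ψ : ℝ → ℝ}

/-- The increment of `g` over `[y₁, y₂] ⊆ [0, 1]` is at least `φ (y₂ - y₁)`. Both halves of the
bi-Hölder condition on an increasing function are bounds of this form and of its counterpart
`IncrementsLE`. -/
def IncrementsGE (g φ : ℝ → ℝ) : Prop :=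
  ∀ y₁ ∈ I, ∀ y₂ ∈ I, y₁ ≤ y₂ → φ (y₂ - y₁) ≤ g y₂ - g y₁

/-- The increment of `g` over `[y₁, y₂] ⊆ [0, 1]` is at most `ψ (y₂ - y₁)`. -/
def IncrementsLE (g ψ : ℝ → ℝ) : Prop :=
  ∀ y₁ ∈ I, ∀ y₂ ∈ I, y₁ ≤ y₂ → g y₂ - g y₁ ≤ ψ (y₂ - y₁)

theorem IncrementsGE.monotoneOn (h : IncrementsGE g φ) (hφ : ∀ t, 0 ≤ t → 0 ≤ φ t) :
    MonotoneOn g I := fun y₁ h₁ y₂ h₂ hle =>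
  sub_nonneg.1 ((hφ _ (sub_nonneg.2 hle)).trans (h y₁ h₁ y₂ h₂ hle))

theorem IncrementsGE.incrementsLE_of_neg
    (h : IncrementsGE (fun y => -g y) (fun t => -ψ t)) : IncrementsLE g ψ :=
  fun y₁ h₁ y₂ h₂ hle => by linarith [h y₁ h₁ y₂ h₂ hle]

end Increments

/-- The retraction of `ℝ` onto `[0, 1]`. -/
def clamp (t : ℝ) : ℝ := projIcc (0 : ℝ) 1 zero_le_one t

section Clamp

variable {t : ℝ}

theorem clamp_mem (t : ℝ) : clamp t ∈ I := (projIcc (0 : ℝ) 1 zero_le_one t).2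

theorem clamp_of_mem (ht : t ∈ I) : clamp t = t := by simp [clamp, projIcc_of_mem _ ht]

theorem clamp_of_nonpos (ht : t ≤ 0) : clamp t = 0 := by simp [clamp, projIcc_of_le_left _ ht]

theorem clamp_of_one_le (ht : 1 ≤ t) : clamp t = 1 := by simp [clamp, projIcc_of_right_le _ ht]

theorem monotone_clamp : Monotone clamp := fun _ _ h => monotone_projIcc zero_le_one h

theorem continuous_clamp : Continuous clamp := continuous_subtype_val.comp continuous_projIcc

theorem abs_clamp_sub_le {y : ℝ} (hy : y ∈ I) : |clamp t - y| ≤ |t - y| := by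
  have h := abs_projIcc_sub_projIcc (c := t) (d := y) (zero_le_one (α := ℝ))
  rwa [projIcc_of_mem _ hy] at h

end Clamp

/-- The piecewise affine function on `[0, 1]` with value `a k` at `k / N` for `k ≤ N`. This
formula makes its linearity in `a` evident. -/
def polygonal (N : ℕ) (a : ℕ → ℝ) (y : ℝ) : ℝ :=
  a 0 + ∑ j ∈ Finset.range N, (a (j + 1) - a j) * clamp (N * y - j)

theorem exists_cell {N : ℕ} (hN : 0 < N) {y : ℝ} (hy : y ∈ I) :
    ∃ i < N, ∃ s ∈ I, y = (i + s) / N := by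
  have hN' : (0 : ℝ) < N := mod_cast hN
  rcases hy.2.eq_or_lt with rfl | hy1
  · refine ⟨N - 1, by omega, 1, ⟨zero_le_one, le_rfl⟩, ?_⟩
    rw [Nat.cast_pred hN, sub_add_cancel, div_self hN'.ne']
  · have hNy : 0 ≤ N * y := mul_nonneg hN'.le hy.1
    refine ⟨⌊N * y⌋₊, (Nat.floor_lt hNy).2 (by nlinarith), N * y - ⌊N * y⌋₊,
      ⟨sub_nonneg.2 (Nat.floor_le hNy), ?_⟩, by field_simp; ring⟩
    linarith [Nat.lt_floor_add_one (N * y)]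

theorem div_mem_unitInterval_of_le {k N : ℕ} (hk : k ≤ N) : (k / N : ℝ) ∈ I :=
  ⟨by positivity, div_le_one_of_le₀ (mod_cast hk) (by positivity)⟩

section Polygonal

variable {N : ℕ} {a : ℕ → ℝ} {φ ψ : ℝ → ℝ} {l L : ℝ}

theorem polygonal_cell {i : ℕ} (hi : i < N) {s : ℝ} (hs : s ∈ I) :
    polygonal N a ((i + s) / N) = (1 - s) * a i + s * a (i + 1) := by
  have hN : (N : ℝ) ≠ 0 := by exact_mod_cast (by omega : N ≠ 0)
  have before : ∀ j ∈ Finset.range i,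
      (a (j + 1) - a j) * clamp (i + s - j) = a (j + 1) - a j := fun j hj => by
    have : (j : ℝ) + 1 ≤ i := mod_cast Finset.mem_range.1 hj
    rw [clamp_of_one_le (by linarith [hs.1]), mul_one]
  have after : ∀ j ∈ Finset.range N, j ∉ Finset.range (i + 1) →
      (a (j + 1) - a j) * clamp (i + s - j) = 0 := fun j _ hj => by
    have : (i : ℝ) + 1 ≤ j := by exact_mod_cast not_lt.1 (mt Finset.mem_range.2 hj)
    rw [clamp_of_nonpos (by linarith [hs.2]), mul_zero]
  rw [polygonal, mul_div_cancel₀ _ hN,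
    ← Finset.sum_subset (Finset.range_subset_range.2 (by omega : i + 1 ≤ N)) after,
    Finset.sum_range_succ, Finset.sum_congr rfl before, Finset.sum_range_sub,
    add_sub_cancel_left, clamp_of_mem hs]
  ring

theorem polygonal_node {k : ℕ} (hk : k ≤ N) : polygonal N a (k / N) = a k := by
  rcases hk.eq_or_lt with rfl | hk
  · rcases k with _ | k
    · simp [polygonal]
    · simpa using polygonal_cell (a := a) k.lt_succ_self (s := 1) ⟨zero_le_one, le_rfl⟩
  · simpa using polygonal_cell (a := a) hk (s := 0) ⟨le_rfl, zero_le_one⟩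

theorem polygonal_neg (y : ℝ) : polygonal N (fun k => -a k) y = -polygonal N a y := by
  simp only [polygonal, neg_add, ← Finset.sum_neg_distrib]
  exact congrArg _ (Finset.sum_congr rfl fun j _ => by ring)

theorem abs_polygonal_sub_le (hN : 0 < N) {y : ℝ} (hy : y ∈ I) {z ω : ℝ}
    (h : ∀ k ≤ N, |k / N - y| ≤ 1 / N → |a k - z| ≤ ω) : |polygonal N a y - z| ≤ ω := by
  have hN' : (0 : ℝ) < N := mod_cast hN
  obtain ⟨i, hi, s, hs, rfl⟩ := exists_cell hN hy
  have left : a i ∈ Metric.closedBall z ω := h i hi.le <| by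
    rw [← sub_div, abs_div, abs_of_pos hN', sub_add_cancel_left, abs_neg, abs_of_nonneg hs.1]
    exact div_le_div_of_nonneg_right hs.2 hN'.le
  have right : a (i + 1) ∈ Metric.closedBall z ω := h (i + 1) hi <| by
    rw [← sub_div, abs_div, abs_of_pos hN', Nat.cast_succ, add_sub_add_left_eq_sub,
      abs_of_nonneg (sub_nonneg.2 hs.2)]
    exact div_le_div_of_nonneg_right (by linarith [hs.1]) hN'.le
  rw [polygonal_cell hi hs]
  exact convex_closedBall z ω left right (sub_nonneg.2 hs.2) hs.1 (sub_add_cancel 1 s)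

theorem convexOn_three_le (hφ : ConvexOn ℝ (Ici 0) φ) {c₁ c₂ c₃ u₁ u₂ u₃ : ℝ} (hc₁ : 0 ≤ c₁)
    (hc₂ : 0 ≤ c₂) (hc₃ : 0 ≤ c₃) (hc : c₁ + c₂ + c₃ = 1) (hu₁ : 0 ≤ u₁) (hu₂ : 0 ≤ u₂)
    (hu₃ : 0 ≤ u₃) :
    φ (c₁ * u₁ + c₂ * u₂ + c₃ * u₃) ≤ c₁ * φ u₁ + c₂ * φ u₂ + c₃ * φ u₃ := by
  simpa [Fin.sum_univ_three] using hφ.map_sum_le (t := Finset.univ) (w := ![c₁, c₂, c₃])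
    (p := ![u₁, u₂, u₃]) (by simp [Fin.forall_fin_succ, hc₁, hc₂, hc₃])
    (by simpa [Fin.sum_univ_three] using hc) (by simp [Fin.forall_fin_succ, hu₁, hu₂, hu₃])

/-- The increment of an interpolant is an average of three increments between nodes. -/
theorem incrementsGE_polygonal (hN : 0 < N) (hφ : ConvexOn ℝ (Ici 0) φ)
    (ha : ∀ p q, p ≤ q → q ≤ N → φ ((q - p) / N) ≤ a q - a p) :
    IncrementsGE (polygonal N a) φ := by
  have hN' : (0 : ℝ) < N := mod_cast hN
  have gap : ∀ p q : ℕ, p ≤ q → (0 : ℝ) ≤ (q - p) / N := fun p q hpq =>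
    div_nonneg (sub_nonneg.2 (mod_cast hpq)) hN'.le
  intro y₁ h₁ y₂ h₂ hle
  rcases hle.eq_or_lt with rfl | hlt
  · simpa using ha 0 0 le_rfl (Nat.zero_le N)
  obtain ⟨i, hi, s, hs, rfl⟩ := exists_cell hN h₁
  obtain ⟨j, hj, t, ht, rfl⟩ := exists_cell hN h₂
  rw [div_lt_div_iff_of_pos_right hN'] at hlt
  rw [polygonal_cell hi hs, polygonal_cell hj ht]
  have hij : i ≤ j := by
    have : (i : ℝ) < j + 1 := by linarith [hs.1, ht.2]
    exact Nat.lt_succ_iff.1 (mod_cast this)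
  have outer := ha i (j + 1) (by omega) hj
  have lower := ha i j hij hj.le
  have upper := ha (i + 1) (j + 1) (by omega) hj
  rcases le_or_gt s t with hst | hst
  · have key := convexOn_three_le hφ (sub_nonneg.2 ht.2) hs.1 (sub_nonneg.2 hst) (by ring)
      (gap i j hij) (gap (i + 1) (j + 1) (by omega)) (gap i (j + 1) (by omega))
    rw [show ((j + t) / N - (i + s) / N : ℝ) = (1 - t) * ((j - i) / N)
      + s * (((j + 1 : ℕ) - (i + 1 : ℕ)) / N) + (t - s) * (((j + 1 : ℕ) - i) / N) by
        push_cast; ring]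
    linarith [mul_le_mul_of_nonneg_left lower (sub_nonneg.2 ht.2),
      mul_le_mul_of_nonneg_left upper hs.1, mul_le_mul_of_nonneg_left outer (sub_nonneg.2 hst)]
  · have hij' : i + 1 ≤ j := by
      have : (i : ℝ) < j := by linarith
      exact_mod_cast this
    have inner := ha (i + 1) j hij' hj.le
    have key := convexOn_three_le hφ (sub_nonneg.2 hs.2) ht.1 (sub_nonneg.2 hst.le) (by ring)
      (gap i j hij) (gap (i + 1) (j + 1) (by omega)) (gap (i + 1) j hij')
    rw [show ((j + t) / N - (i + s) / N : ℝ) = (1 - s) * ((j - i) / N)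
      + t * (((j + 1 : ℕ) - (i + 1 : ℕ)) / N) + (s - t) * ((j - (i + 1 : ℕ)) / N) by
        push_cast; ring]
    linarith [mul_le_mul_of_nonneg_left lower (sub_nonneg.2 hs.2),
      mul_le_mul_of_nonneg_left upper ht.1, mul_le_mul_of_nonneg_left inner (sub_nonneg.2 hst.le)]

theorem incrementsLE_polygonal (hN : 0 < N) (hψ : ConcaveOn ℝ (Ici 0) ψ)
    (ha : ∀ p q, p ≤ q → q ≤ N → a q - a p ≤ ψ ((q - p) / N)) :
    IncrementsLE (polygonal N a) ψ := by
  refine IncrementsGE.incrementsLE_of_neg ?_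
  simp only [← polygonal_neg]
  exact incrementsGE_polygonal hN hψ.neg fun p q hpq hq => by linarith [ha p q hpq hq]

theorem incrementsGE_polygonal_of_succ (hN : 0 < N)
    (ha : ∀ j < N, l / N ≤ a (j + 1) - a j) : IncrementsGE (polygonal N a) (fun t => l * t) := by
  refine incrementsGE_polygonal hN (LinearMap.convexOn (LinearMap.mulLeft ℝ l) (convex_Ici 0))
    fun p q hpq => ?_
  induction q, hpq using Nat.le_induction with
  | base => simp
  | succ q _ ih =>
    intro hq
    have step := ha q hq
    have : l * (((q + 1 : ℕ) - p) / N) = l * ((q - p) / N) + l / N := by push_cast; ring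
    linarith [ih (by omega)]

theorem incrementsLE_polygonal_of_succ (hN : 0 < N)
    (ha : ∀ j < N, a (j + 1) - a j ≤ L / N) : IncrementsLE (polygonal N a) (fun t => L * t) := by
  refine IncrementsGE.incrementsLE_of_neg ?_
  simp only [← polygonal_neg, ← neg_mul]
  exact incrementsGE_polygonal_of_succ hN fun j hj => by rw [neg_div]; linarith [ha j hj]

theorem hasDerivWithinAt_polygonal {b : ℝ → ℕ → ℝ} {b' : ℕ → ℝ} {S : Set ℝ} {x : ℝ}
    (hb : ∀ k, HasDerivWithinAt (fun x => b x k) (b' k) S x) (y : ℝ) :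
    HasDerivWithinAt (fun x => polygonal N (b x) y) (polygonal N b' y) S x :=
  (hb 0).add <| HasDerivWithinAt.fun_sum fun j _ => ((hb (j + 1)).sub (hb j)).mul_const _

theorem continuousOn_polygonal {b : ℝ → ℕ → ℝ} {S : Set ℝ} (T : Set ℝ)
    (hb : ∀ k, ContinuousOn (fun x => b x k) S) :
    ContinuousOn (fun p : ℝ × ℝ => polygonal N (b p.1) p.2) (S ×ˢ T) := by
  have hb' : ∀ k, ContinuousOn (fun p : ℝ × ℝ => b p.1 k) (S ×ˢ T) := fun k =>
    (hb k).comp continuousOn_fst fun p hp => hp.1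
  exact (hb' 0).add <| continuousOn_finsetSum _ fun j _ => ((hb' (j + 1)).sub (hb' j)).mul
    (continuous_clamp.comp (by fun_prop)).continuousOn

end Polygonal

/-- The values of `g` at the multiples `i / N ∈ [0, 1]`. Clamping extends the sequence by a
constant, so that facts about it need no bound on `i`. -/
def sample (N : ℕ) (g : ℝ → ℝ) (i : ℕ) : ℝ := g (clamp (i / N))

section Sample

variable {N : ℕ} {g φ ψ : ℝ → ℝ}

theorem sample_of_le {i : ℕ} (hi : i ≤ N) : sample N g i = g (i / N) := by
  rw [sample, clamp_of_mem (div_mem_unitInterval_of_le hi)]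

theorem sample_zero : sample N g 0 = g 0 := by
  rw [sample_of_le (Nat.zero_le N), Nat.cast_zero, zero_div]

theorem sample_self (hN : 0 < N) : sample N g N = g 1 := by
  rw [sample_of_le le_rfl, div_self (by exact_mod_cast hN.ne')]

theorem div_mem_unitInterval_and_le {p q : ℕ} (hpq : p ≤ q) (hq : q ≤ N) :
    (p / N : ℝ) ∈ I ∧ (q / N : ℝ) ∈ I ∧ (p / N : ℝ) ≤ q / N :=
  ⟨div_mem_unitInterval_of_le (hpq.trans hq), div_mem_unitInterval_of_le hq, by gcongr⟩

theorem IncrementsGE.le_sample_sub (h : IncrementsGE g φ) {p q : ℕ} (hpq : p ≤ q) (hq : q ≤ N) :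
    φ ((q - p) / N) ≤ sample N g q - sample N g p := by
  obtain ⟨hpI, hqI, hle⟩ := div_mem_unitInterval_and_le hpq hq
  rw [sample_of_le hq, sample_of_le (hpq.trans hq), sub_div]
  exact h _ hpI _ hqI hle

theorem IncrementsLE.sample_sub_le (h : IncrementsLE g ψ) {p q : ℕ} (hpq : p ≤ q) (hq : q ≤ N) :
    sample N g q - sample N g p ≤ ψ ((q - p) / N) := by
  obtain ⟨hpI, hqI, hle⟩ := div_mem_unitInterval_and_le hpq hq
  rw [sample_of_le hq, sample_of_le (hpq.trans hq), sub_div]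
  exact h _ hpI _ hqI hle

theorem IncrementsGE.polygonal_sample (h : IncrementsGE g φ) (hN : 0 < N)
    (hφ : ConvexOn ℝ (Ici 0) φ) : IncrementsGE (polygonal N (sample N g)) φ :=
  incrementsGE_polygonal hN hφ fun _ _ => h.le_sample_sub

theorem IncrementsLE.polygonal_sample (h : IncrementsLE g ψ) (hN : 0 < N)
    (hψ : ConcaveOn ℝ (Ici 0) ψ) : IncrementsLE (polygonal N (sample N g)) ψ :=
  incrementsLE_polygonal hN hψ fun _ _ => h.sample_sub_le

end Sample

/-- Given nodes `a i` at distance `1` and weights `Θ q` running from `Θ 0 = 0` to `Θ K = 1`, the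
refined nodes at distance `1 / K`: the node at `i + q / K` divides `[a i, a (i + 1)]` in the
proportion `Θ q`. -/
def subdivide (K : ℕ) (Θ a : ℕ → ℝ) (k : ℕ) : ℝ :=
  a (k / K) + (a (k / K + 1) - a (k / K)) * Θ (k % K)

section Subdivide

variable {K : ℕ} {Θ a : ℕ → ℝ}

theorem subdivide_mul_add (hK : 0 < K) (h0 : Θ 0 = 0) (h1 : Θ K = 1) (i : ℕ) {q : ℕ}
    (hq : q ≤ K) : subdivide K Θ a (i * K + q) = a i + (a (i + 1) - a i) * Θ q := by
  rcases hq.eq_or_lt with rfl | hq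
  · simp [subdivide, ← Nat.succ_mul, Nat.mul_div_cancel _ hK, h0, h1]
  · rw [subdivide, Nat.mul_add_mod', Nat.mod_eq_of_lt hq, mul_comm i, Nat.mul_add_div hK,
      Nat.div_eq_of_lt hq, add_zero]

theorem subdivide_mul (hK : 0 < K) (h0 : Θ 0 = 0) (i : ℕ) : subdivide K Θ a (i * K) = a i := by
  simp [subdivide, Nat.mul_div_cancel _ hK, h0]

theorem subdivide_succ_sub (hK : 0 < K) (h0 : Θ 0 = 0) (h1 : Θ K = 1) (i : ℕ) {q : ℕ}
    (hq : q < K) :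
    subdivide K Θ a (i * K + q + 1) - subdivide K Θ a (i * K + q) =
      (a (i + 1) - a i) * (Θ (q + 1) - Θ q) := by
  rw [add_assoc, subdivide_mul_add hK h0 h1 i hq, subdivide_mul_add hK h0 h1 i hq.le]
  ring

theorem exists_eq_mul_add_of_lt_mul {N k : ℕ} (hk : k < N * K) :
    ∃ i < N, ∃ q < K, k = i * K + q :=
  ⟨k / K, Nat.div_lt_of_lt_mul (by rwa [mul_comm]), k % K,
    Nat.mod_lt _ (Nat.pos_of_mul_pos_left (by omega : 0 < N * K)),
    (Nat.div_add_mod' k K).symm⟩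

theorem le_subdivide_succ_sub {N : ℕ} {l η : ℝ} (h0 : Θ 0 = 0) (h1 : Θ K = 1)
    (hl : 0 ≤ l) (ha : ∀ i < N, l / N ≤ a (i + 1) - a i) (hη : 0 ≤ η)
    (hΘ : ∀ q < K, η / K ≤ Θ (q + 1) - Θ q) {k : ℕ} (hk : k < N * K) :
    η * l / (N * K : ℕ) ≤ subdivide K Θ a (k + 1) - subdivide K Θ a k := by
  obtain ⟨i, hi, q, hq, rfl⟩ := exists_eq_mul_add_of_lt_mul hk
  rw [subdivide_succ_sub (by omega) h0 h1 i hq, Nat.cast_mul, mul_comm η, mul_div_mul_comm]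
  have hl' : 0 ≤ l / N := by positivity
  exact mul_le_mul (ha i hi) (hΘ q hq) (by positivity) (hl'.trans (ha i hi))

theorem subdivide_succ_sub_le {N : ℕ} {L : ℝ} (h0 : Θ 0 = 0) (h1 : Θ K = 1) (hL : 0 ≤ L)
    (ha : ∀ i < N, a (i + 1) - a i ≤ L / N) (hΘ : ∀ q < K, 0 ≤ Θ (q + 1) - Θ q)
    (hΘ' : ∀ q < K, Θ (q + 1) - Θ q ≤ 1) {k : ℕ} (hk : k < N * K) :
    subdivide K Θ a (k + 1) - subdivide K Θ a k ≤ K * L / (N * K : ℕ) := by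
  obtain ⟨i, hi, q, hq, rfl⟩ := exists_eq_mul_add_of_lt_mul hk
  have hK : (0 : ℝ) < K := mod_cast (by omega : 0 < K)
  rw [subdivide_succ_sub (by omega) h0 h1 i hq, Nat.cast_mul, mul_comm (K : ℝ) L,
    mul_div_mul_right _ _ hK.ne', ← mul_one (L / N)]
  exact mul_le_mul (ha i hi) (hΘ' q hq) (hΘ q hq) (by positivity)

theorem abs_subdivide_sub_le {k : ℕ} (hΘ : Θ (k % K) ∈ I) {z ω : ℝ} (ha : |a (k / K) - z| ≤ ω)
    (ha' : |a (k / K + 1) - z| ≤ ω) : |subdivide K Θ a k - z| ≤ ω := by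
  have hmem : (1 - Θ (k % K)) * a (k / K) + Θ (k % K) * a (k / K + 1) ∈ Metric.closedBall z ω :=
    convex_closedBall z ω ha ha' (sub_nonneg.2 hΘ.2) hΘ.1 (sub_add_cancel 1 _)
  have heq : subdivide K Θ a k = (1 - Θ (k % K)) * a (k / K) + Θ (k % K) * a (k / K + 1) := by
    rw [subdivide]; ring
  rwa [heq]

theorem hasDerivWithinAt_subdivide {Θ b : ℝ → ℕ → ℝ} {Θ' b' : ℕ → ℝ} {S : Set ℝ} {x : ℝ}
    (hΘ : ∀ q, HasDerivWithinAt (fun x => Θ x q) (Θ' q) S x)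
    (hb : ∀ i, HasDerivWithinAt (fun x => b x i) (b' i) S x) (k : ℕ) :
    HasDerivWithinAt (fun x => subdivide K (Θ x) (b x) k)
      (subdivide K (Θ x) b' k + (b x (k / K + 1) - b x (k / K)) * Θ' (k % K)) S x :=
  ((hb _).add (((hb _).sub (hb _)).mul (hΘ _))).congr_deriv <| by
    simp only [subdivide, Pi.sub_apply]; ring

end Subdivide

/-- Weights `0 = Θ 0 < ⋯ < Θ K = 1` depending smoothly on `x`, for use in `subdivide`. They are
uniform at `x = 0`; for `x` in the core `[(q + η) / K, (q + 1) / K]` of the `q`-th strip the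
increment of index `q` takes up all but a proportion `η`. A step `S ((K x - q) / η)` rises from
`0` to `1` over `[q / K, (q + η) / K]`, and the term linear in `q` restores the end value `1`. -/
def staircase (K : ℕ) (η x : ℝ) (q : ℕ) : ℝ :=
  let S (q : ℕ) : ℝ := Real.smoothTransition ((K * x - q) / η)
  q / K + (1 - η) * (S 0 - S q - q / K * (S 0 - S K))

section Staircase

variable {K : ℕ} {η x : ℝ}

theorem staircase_zero : staircase K η x 0 = 0 := by simp [staircase]

theorem staircase_last (hK : 0 < K) : staircase K η x K = 1 := by
  have : (K : ℝ) ≠ 0 := by exact_mod_cast hK.ne'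
  simp [staircase, div_self this]

theorem staircase_at_zero (hη : 0 ≤ η) (q : ℕ) : staircase K η 0 q = q / K := by
  have flat (q : ℕ) : Real.smoothTransition ((K * 0 - q) / η) = 0 :=
    Real.smoothTransition.zero_of_nonpos (div_nonpos_of_nonpos_of_nonneg (by simp) hη)
  simp only [staircase]
  rw [flat, flat, flat, sub_zero, mul_zero, sub_zero, mul_zero, add_zero]

theorem contDiff_staircase (K : ℕ) (η : ℝ) (q : ℕ) : ContDiff ℝ 1 fun x => staircase K η x q := by
  have step (q : ℕ) : ContDiff ℝ 1 fun x : ℝ => Real.smoothTransition ((K * x - q) / η) :=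
    Real.smoothTransition.contDiff.comp (by fun_prop)
  simp only [staircase]
  exact contDiff_const.add <| contDiff_const.mul <|
    ((step 0).sub (step q)).sub <| contDiff_const.mul <| (step 0).sub (step K)

theorem staircase_succ_sub (q : ℕ) :
    staircase K η x (q + 1) - staircase K η x q = 1 / K + (1 - η) *
      (Real.smoothTransition ((K * x - q) / η) -
        Real.smoothTransition ((K * x - (q + 1 : ℕ)) / η) -
      1 / K * (Real.smoothTransition (K * x / η) -
        Real.smoothTransition ((K * x - K) / η))) := by
  simp only [staircase, Nat.cast_succ, Nat.cast_zero, sub_zero]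
  ring

theorem smoothTransition_sub_nonneg (hη : 0 ≤ η) {t u : ℝ} (h : u ≤ t) :
    0 ≤ Real.smoothTransition (t / η) - Real.smoothTransition (u / η) :=
  sub_nonneg.2 (Real.smoothTransition.monotone (div_le_div_of_nonneg_right h hη))

theorem smoothTransition_sub_le_one (t u : ℝ) :
    Real.smoothTransition t - Real.smoothTransition u ≤ 1 := by
  linarith [Real.smoothTransition.le_one t, Real.smoothTransition.nonneg u]

theorem le_staircase_succ_sub (hη : 0 ≤ η) (hη1 : η ≤ 1) (q : ℕ) :
    η / K ≤ staircase K η x (q + 1) - staircase K η x q := by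
  have rise := smoothTransition_sub_nonneg hη
    (by push_cast; linarith : K * x - (q + 1 : ℕ) ≤ K * x - q)
  have total := smoothTransition_sub_le_one (K * x / η) ((K * x - K) / η)
  rw [staircase_succ_sub]
  calc η / K = 1 / K + (1 - η) * (0 - 1 / K * 1) := by ring
    _ ≤ _ := by gcongr

theorem staircase_succ_sub_le (hη : 0 ≤ η) (hη1 : η ≤ 1) {q : ℕ} (hq : q < K) :
    staircase K η x (q + 1) - staircase K η x q ≤ 1 := by
  have hqK : (q : ℝ) + 1 ≤ K := mod_cast hq
  have hK : (1 : ℝ) / K ≤ 1 := div_le_one_of_le₀ (by linarith [q.cast_nonneg (α := ℝ)]) (by simp)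
  have before := smoothTransition_sub_nonneg hη (by simp : K * x - q ≤ K * x)
  have after := smoothTransition_sub_nonneg hη
    (by push_cast; linarith : K * x - K ≤ K * x - (q + 1 : ℕ))
  have total := smoothTransition_sub_le_one (K * x / η) ((K * x - K) / η)
  have total' := smoothTransition_sub_nonneg hη (by simp : K * x - K ≤ K * x)
  rw [staircase_succ_sub]
  set T := Real.smoothTransition (K * x / η) - Real.smoothTransition ((K * x - K) / η)
  calc _ ≤ 1 / K + (1 - η) * (T - 1 / K * T) := by gcongr; linarith
    _ = 1 / K + (1 - η) * ((1 - 1 / K) * T) := by ring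
    _ ≤ 1 / K + 1 * ((1 - 1 / K) * 1) := by gcongr; linarith
    _ = 1 := by ring

theorem staircase_mem (hη : 0 ≤ η) (hη1 : η ≤ 1) {q : ℕ} (hq : q ≤ K) :
    staircase K η x q ∈ I := by
  rcases K.eq_zero_or_pos with rfl | hK
  · rw [Nat.le_zero.1 hq, staircase_zero]
    exact ⟨le_rfl, zero_le_one⟩
  have mono : Monotone (staircase K η x) := monotone_nat_of_le_succ fun q =>
    sub_nonneg.1 (le_trans (by positivity) (le_staircase_succ_sub hη hη1 q))
  exact ⟨staircase_zero.symm.trans_le (mono q.zero_le), (mono hq).trans_eq (staircase_last hK)⟩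

theorem le_staircase_succ_sub_of_core (hη : 0 < η) (hη1 : η ≤ 1) {q : ℕ} (h₁ : η ≤ K * x - q)
    (h₂ : K * x - q ≤ 1) : 1 - η ≤ staircase K η x (q + 1) - staircase K η x q := by
  have high : Real.smoothTransition ((K * x - q) / η) = 1 :=
    Real.smoothTransition.one_of_one_le ((one_le_div hη).2 h₁)
  have low : Real.smoothTransition ((K * x - (q + 1 : ℕ)) / η) = 0 :=
    Real.smoothTransition.zero_of_nonpos
      (div_nonpos_of_nonpos_of_nonneg (by push_cast; linarith) hη.le)
  have total := smoothTransition_sub_le_one (K * x / η) ((K * x - K) / η)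
  have hK : (0 : ℝ) ≤ 1 / K := by positivity
  rw [staircase_succ_sub, high, low]
  calc 1 - η ≤ 1 / K + (1 - η) * (1 - 0 - 1 / K * 1) := by nlinarith
    _ ≤ _ := by gcongr

theorem exists_abs_deriv_staircase_le (K : ℕ) (η : ℝ) :
    ∃ B, ∀ x ∈ I, ∀ q ≤ K, |deriv (fun x => staircase K η x q) x| ≤ B := by
  have bound (q : ℕ) : ∃ B, ∀ x ∈ I, |deriv (fun x => staircase K η x q) x| ≤ B :=
    isCompact_Icc.exists_bound_of_continuousOn
      ((contDiff_staircase K η q).continuous_deriv le_rfl).continuousOn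
  choose B hB using bound
  obtain ⟨M, hM⟩ := Finset.exists_le ((Finset.range (K + 1)).image B)
  exact ⟨M, fun x hx q hq => (hB q x hx).trans
    (hM _ (Finset.mem_image_of_mem B (Finset.mem_range.2 (by omega))))⟩

end Staircase

/-! ### Foliations and the distance `d_α` -/

section Foliations

variable {C β : ℝ} {x : ℝ}

namespace Fol

theorem abs_sub_le (hβ : 0 < β) (F : Fol C β) (hx : x ∈ I) {y₁ y₂ : ℝ} (h₁ : y₁ ∈ I)
    (h₂ : y₂ ∈ I) : |F.f x y₂ - F.f x y₁| ≤ C * |y₂ - y₁| ^ β := by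
  rcases eq_or_ne y₁ y₂ with rfl | hne
  · simp [Real.zero_rpow hβ.ne']
  · exact F.isFol.upper x hx y₁ h₁ y₂ h₂ hne

theorem le_abs_sub (hβ : 0 < β) (F : Fol C β) (hx : x ∈ I) {y₁ y₂ : ℝ} (h₁ : y₁ ∈ I)
    (h₂ : y₂ ∈ I) : C⁻¹ * |y₂ - y₁| ^ (1 / β) ≤ |F.f x y₂ - F.f x y₁| := by
  rcases eq_or_ne y₁ y₂ with rfl | hne
  · simp [Real.zero_rpow (inv_ne_zero hβ.ne')]
  · exact F.isFol.lower x hx y₁ h₁ y₂ h₂ hne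

theorem abs_sub_le_rpow (hC : 0 < C) (hβ : 0 < β) (F : Fol C β) (hx : x ∈ I) {y₁ y₂ : ℝ}
    (h₁ : y₁ ∈ I) (h₂ : y₂ ∈ I) : |y₂ - y₁| ≤ C ^ β * |F.f x y₂ - F.f x y₁| ^ β := by
  have h := (inv_mul_le_iff₀ hC).1 (F.le_abs_sub hβ hx h₁ h₂)
  calc |y₂ - y₁| = (|y₂ - y₁| ^ (1 / β)) ^ β := by
        rw [one_div, Real.rpow_inv_rpow (abs_nonneg _) hβ.ne']
    _ ≤ (C * |F.f x y₂ - F.f x y₁|) ^ β := Real.rpow_le_rpow (by positivity) h hβ.le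
    _ = _ := Real.mul_rpow hC.le (abs_nonneg _)

theorem continuousOn (hβ : 0 < β) (F : Fol C β) (hx : x ∈ I) : ContinuousOn (F.f x) I := by
  intro y hy
  rw [ContinuousWithinAt, tendsto_iff_dist_tendsto_zero]
  have hcont : Continuous fun z : ℝ => C * |z - y| ^ β :=
    continuous_const.mul ((by fun_prop : Continuous fun z : ℝ => |z - y|).rpow_const
      fun _ => Or.inr hβ.le)
  have hlim : Tendsto (fun z => C * |z - y| ^ β) (𝓝[I] y) (𝓝 0) := by
    simpa [Real.zero_rpow hβ.ne'] using (hcont.tendsto y).mono_left nhdsWithin_le_nhds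
  refine squeeze_zero' (Eventually.of_forall fun _ => dist_nonneg) ?_ hlim
  filter_upwards [self_mem_nhdsWithin] with z hz
  exact F.abs_sub_le hβ hx hy hz

theorem strictMonoOn (hC : 0 < C) (hβ : 0 < β) (F : Fol C β) (hx : x ∈ I) :
    StrictMonoOn (F.f x) I := by
  refine ContinuousOn.strictMonoOn_of_injOn_Icc zero_le_one ?_ (F.continuousOn hβ hx) ?_
  · rw [F.isFol.eq_bot x hx, F.isFol.eq_top x hx]
    exact zero_le_one
  · intro y₁ h₁ y₂ h₂ heq
    have h := F.abs_sub_le_rpow hC hβ hx h₁ h₂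
    rw [heq, sub_self, abs_zero, Real.zero_rpow hβ.ne', mul_zero] at h
    exact (sub_eq_zero.1 (abs_nonpos_iff.1 h)).symm

theorem surjOn (hβ : 0 < β) (F : Fol C β) (hx : x ∈ I) : SurjOn (F.f x) I I := by
  have h := intermediate_value_Icc zero_le_one (F.continuousOn hβ hx)
  rwa [F.isFol.eq_bot x hx, F.isFol.eq_top x hx] at h

theorem hinv_mem (hβ : 0 < β) (F : Fol C β) (hx : x ∈ I) {z : ℝ} (hz : z ∈ I) :
    hinv F.f x z ∈ I :=
  Function.invFunOn_mem (F.surjOn hβ hx hz)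

theorem f_hinv (hβ : 0 < β) (F : Fol C β) (hx : x ∈ I) {z : ℝ} (hz : z ∈ I) :
    F.f x (hinv F.f x z) = z :=
  Function.invFunOn_eq (F.surjOn hβ hx hz)

theorem abs_hinv_sub_le (hC : 0 < C) (hβ : 0 < β) (F : Fol C β) (hx : x ∈ I) {z₁ z₂ : ℝ}
    (h₁ : z₁ ∈ I) (h₂ : z₂ ∈ I) : |hinv F.f x z₂ - hinv F.f x z₁| ≤ C ^ β * |z₂ - z₁| ^ β := by
  have h := F.abs_sub_le_rpow hC hβ hx (F.hinv_mem hβ hx h₁) (F.hinv_mem hβ hx h₂)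
  rwa [F.f_hinv hβ hx h₁, F.f_hinv hβ hx h₂] at h

theorem abs_hinv_sub_hinv_le (hC : 0 < C) (hβ : 0 < β) (F G : Fol C β) (hx : x ∈ I) {z : ℝ}
    (hz : z ∈ I) {δ : ℝ} (h : ∀ y ∈ I, |F.f x y - G.f x y| ≤ δ) :
    |hinv F.f x z - hinv G.f x z| ≤ C ^ β * δ ^ β := by
  have hmem := G.hinv_mem hβ hx hz
  calc |hinv F.f x z - hinv G.f x z|
      ≤ C ^ β * |F.f x (hinv F.f x z) - F.f x (hinv G.f x z)| ^ β :=
        F.abs_sub_le_rpow hC hβ hx hmem (F.hinv_mem hβ hx hz)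
    _ = C ^ β * |F.f x (hinv G.f x z) - G.f x (hinv G.f x z)| ^ β := by
        rw [F.f_hinv hβ hx hz, G.f_hinv hβ hx hz, abs_sub_comm]
    _ ≤ C ^ β * δ ^ β := by
        gcongr
        exact h _ hmem

theorem incrementsGE (hC : 0 < C) (hβ : 0 < β) (F : Fol C β) (hx : x ∈ I) :
    IncrementsGE (F.f x) fun t => C⁻¹ * t ^ (1 / β) := fun y₁ h₁ y₂ h₂ hle => by
  have hmono := (F.strictMonoOn hC hβ hx).monotoneOn h₁ h₂ hle
  have h := F.le_abs_sub hβ hx h₁ h₂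
  rwa [abs_of_nonneg (sub_nonneg.2 hle), abs_of_nonneg (sub_nonneg.2 hmono)] at h

theorem incrementsLE (hβ : 0 < β) (F : Fol C β) (hx : x ∈ I) :
    IncrementsLE (F.f x) fun t => C * t ^ β := fun y₁ h₁ y₂ h₂ hle => by
  have h := F.abs_sub_le hβ hx h₁ h₂
  rw [abs_of_nonneg (sub_nonneg.2 hle)] at h
  exact (le_abs_self _).trans h

end Fol

theorem isFol_of_increments (hC : 0 < C) {f fx : ℝ → ℝ → ℝ}
    (hasDeriv : ∀ y ∈ I, ∀ x ∈ I, HasDerivWithinAt (fun x' => f x' y) (fx x y) I x)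
    (derivCont : ContinuousOn (fun p : ℝ × ℝ => fx p.1 p.2) MSq)
    (eq_id : ∀ y ∈ I, f 0 y = y) (eq_bot : ∀ x ∈ I, f x 0 = 0) (eq_top : ∀ x ∈ I, f x 1 = 1)
    (hGE : ∀ x ∈ I, IncrementsGE (f x) fun t => C⁻¹ * t ^ (1 / β))
    (hLE : ∀ x ∈ I, IncrementsLE (f x) fun t => C * t ^ β) : IsFol C β f fx := by
  have mono (x : ℝ) (hx : x ∈ I) : MonotoneOn (f x) I :=
    (hGE x hx).monotoneOn fun t ht => by positivity
  refine ⟨fun x hx y hy => ⟨?_, ?_⟩, hasDeriv, derivCont, eq_id, eq_bot, eq_top, ?_, ?_⟩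
  · exact (eq_bot x hx).symm.trans_le (mono x hx ⟨le_rfl, zero_le_one⟩ hy hy.1)
  · exact (mono x hx hy ⟨zero_le_one, le_rfl⟩ hy.2).trans_eq (eq_top x hx)
  all_goals
    intro x hx y₁ h₁ y₂ h₂ hne
    wlog hle : y₁ ≤ y₂ generalizing y₁ y₂
    · rw [abs_sub_comm y₂, abs_sub_comm (f x y₂)]
      exact this y₂ h₂ y₁ h₁ hne.symm (le_of_not_ge hle)
    rw [abs_of_nonneg (sub_nonneg.2 hle), abs_of_nonneg (sub_nonneg.2 (mono x hx h₁ h₂ hle))]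
  · exact hGE x hx y₁ h₁ y₂ h₂ hle
  · exact hLE x hx y₁ h₁ y₂ h₂ hle

/-- `C¹`-closeness in the first variable, uniform over the square; `fx` and `gx` stand for
`∂f/∂x` and `∂g/∂x`. -/
def C1Close (δ : ℝ) (f fx g gx : ℝ → ℝ → ℝ) : Prop :=
  ∀ x ∈ I, ∀ y ∈ I, |f x y - g x y| ≤ δ ∧ |fx x y - gx x y| ≤ δ

theorem C1Close.trans {δ₁ δ₂ : ℝ} {f fx g gx h hx : ℝ → ℝ → ℝ} (h₁ : C1Close δ₁ f fx g gx)
    (h₂ : C1Close δ₂ g gx h hx) : C1Close (δ₁ + δ₂) f fx h hx := fun x hx y hy =>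
  ⟨(_root_.abs_sub_le _ _ _).trans (add_le_add (h₁ x hx y hy).1 (h₂ x hx y hy).1),
    (_root_.abs_sub_le _ _ _).trans (add_le_add (h₁ x hx y hy).2 (h₂ x hx y hy).2)⟩

theorem exists_modulus_snd {u : ℝ → ℝ → ℝ} (hu : ContinuousOn (fun p : ℝ × ℝ => u p.1 p.2) MSq)
    {ε : ℝ} (hε : 0 < ε) :
    ∃ δ > 0, ∀ x ∈ I, ∀ y ∈ I, ∀ y' ∈ I, |y - y'| ≤ δ → |u x y - u x y'| ≤ ε := by
  have hunif := (isCompact_Icc.prod isCompact_Icc).uniformContinuousOn_of_continuous hu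
  obtain ⟨δ, hδ, h⟩ := Metric.uniformContinuousOn_iff_le.1 hunif ε hε
  refine ⟨δ, hδ, fun x hx y hy y' hy' hle => h (x, y) ⟨hx, hy⟩ (x, y') ⟨hx, hy'⟩ ?_⟩
  rwa [Prod.dist_eq, dist_self, max_eq_right dist_nonneg, Real.dist_eq]

theorem Fol.exists_modulus (hC : 0 < C) (hβ : 0 < β) (F : Fol C β) {ε : ℝ} (hε : 0 < ε) :
    ∃ δ > 0, ∀ x ∈ I, ∀ y ∈ I, ∀ y' ∈ I, |y - y'| ≤ δ →
      |F.f x y - F.f x y'| ≤ ε ∧ |F.fx x y - F.fx x y'| ≤ ε := by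
  obtain ⟨δ₁, hδ₁, h₁⟩ := exists_modulus_snd F.isFol.derivCont hε
  refine ⟨min δ₁ ((ε / C) ^ β⁻¹), by positivity, fun x hx y hy y' hy' hle =>
    ⟨?_, h₁ x hx y hy y' hy' (hle.trans (min_le_left _ _))⟩⟩
  calc |F.f x y - F.f x y'| ≤ C * |y - y'| ^ β := F.abs_sub_le hβ hx hy' hy
    _ ≤ C * ((ε / C) ^ β⁻¹) ^ β := by
        gcongr
        exact hle.trans (min_le_right _ _)
    _ = ε := by rw [Real.rpow_inv_rpow (by positivity) hβ.ne', mul_div_cancel₀ _ hC.ne']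

section Distance

variable {α : ℝ}

theorem C0dist_nonneg (u v : ℝ → ℝ → ℝ) : 0 ≤ C0dist u v := by
  refine Real.sSup_nonneg ?_
  rintro _ ⟨x, -, y, -, rfl⟩
  exact abs_nonneg _

theorem C0dist_le {u v : ℝ → ℝ → ℝ} {δ : ℝ} (hδ : 0 ≤ δ)
    (h : ∀ x ∈ I, ∀ y ∈ I, |u x y - v x y| ≤ δ) : C0dist u v ≤ δ := by
  refine Real.sSup_le ?_ hδ
  rintro _ ⟨x, hx, y, hy, rfl⟩
  exact h x hx y hy

theorem holDist_nonneg (α : ℝ) (u v : ℝ → ℝ) : 0 ≤ holDist α u v := by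
  refine Real.sSup_nonneg ?_
  rintro _ ⟨y₁, -, y₂, -, -, rfl⟩
  positivity

theorem abs_sub_le_C0dist (F G : Fol C β) (hx : x ∈ I) {y : ℝ} (hy : y ∈ I) :
    |F.f x y - G.f x y| ≤ C0dist F.f G.f := by
  refine le_csSup ⟨1, ?_⟩ ⟨x, hx, y, hy, rfl⟩
  rintro _ ⟨x, hx, y, hy, rfl⟩
  have hF := F.isFol.mapsTo x hx y hy
  have hG := G.isFol.mapsTo x hx y hy
  exact abs_le.2 ⟨by linarith [hF.1, hG.2], by linarith [hF.2, hG.1]⟩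

theorem abs_sub_le_dalphaF (α : ℝ) (F G : Fol C β) (hx : x ∈ I) {y : ℝ} (hy : y ∈ I) :
    |F.f x y - G.f x y| ≤ dalphaF α F G := by
  have holonomies : 0 ≤ sSup {r | ∃ x ∈ I,
      r = max (holDist α (F.f x) (G.f x)) (holDist α (hinv F.f x) (hinv G.f x))} := by
    refine Real.sSup_nonneg ?_
    rintro _ ⟨x, -, rfl⟩
    exact le_max_of_le_left (holDist_nonneg _ _ _)
  rw [dalphaF, dalpha]
  linarith [abs_sub_le_C0dist F G hx hy, C0dist_nonneg F.fx G.fx]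

/-- Interpolation between `C⁰` and `C^β`: the `β`-Hölder bound controls the increments of `u - v`
at scales below `r`, where `2 K r ^ (β - α) = ε`, and the `C⁰` bound those above. -/
theorem exists_holDist_le (hα : 0 ≤ α) (hαβ : α < β) {K : ℝ} (hK : 0 < K) {ε : ℝ} (hε : 0 < ε) :
    ∃ δ > 0, ∀ u v : ℝ → ℝ, (∀ y ∈ I, |u y - v y| ≤ δ) →
      (∀ y₁ ∈ I, ∀ y₂ ∈ I, |u y₂ - u y₁| ≤ K * |y₂ - y₁| ^ β) →
      (∀ y₁ ∈ I, ∀ y₂ ∈ I, |v y₂ - v y₁| ≤ K * |y₂ - y₁| ^ β) →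
      holDist α u v ≤ ε := by
  have hβα : 0 < β - α := sub_pos.2 hαβ
  set r : ℝ := (ε / (2 * K)) ^ (β - α)⁻¹ with hr
  have : 0 < r := by positivity
  have hscale : 2 * K * r ^ (β - α) = ε := by
    rw [hr, Real.rpow_inv_rpow (by positivity) hβα.ne', mul_div_cancel₀ _ (by positivity)]
  refine ⟨ε * r ^ α / 2, by positivity, fun u v huv hu hv => Real.sSup_le ?_ hε.le⟩
  rintro _ ⟨y₁, h₁, y₂, h₂, hne, rfl⟩
  have hpos : 0 < |y₂ - y₁| := abs_pos.2 (sub_ne_zero.2 hne.symm)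
  rw [div_le_iff₀ (by positivity)]
  rcases le_total |y₂ - y₁| r with hsmall | hlarge
  · calc |u y₂ - v y₂ - (u y₁ - v y₁)| = |u y₂ - u y₁ - (v y₂ - v y₁)| := by ring_nf
      _ ≤ |u y₂ - u y₁| + |v y₂ - v y₁| := abs_sub _ _
      _ ≤ 2 * K * |y₂ - y₁| ^ β := by linarith [hu y₁ h₁ y₂ h₂, hv y₁ h₁ y₂ h₂]
      _ = 2 * K * |y₂ - y₁| ^ (β - α) * |y₂ - y₁| ^ α := by
          rw [mul_assoc _ (_ ^ (β - α)), ← Real.rpow_add hpos, sub_add_cancel]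
      _ ≤ 2 * K * r ^ (β - α) * |y₂ - y₁| ^ α := by gcongr
      _ = ε * |y₂ - y₁| ^ α := by rw [hscale]
  · calc |u y₂ - v y₂ - (u y₁ - v y₁)| ≤ |u y₂ - v y₂| + |u y₁ - v y₁| := abs_sub _ _
      _ ≤ ε * r ^ α := by linarith [huv y₁ h₁, huv y₂ h₂]
      _ ≤ ε * |y₂ - y₁| ^ α := by gcongr

theorem exists_dalphaF_lt_of_C1Close (hC : 0 < C) (hα : 0 ≤ α) (hαβ : α < β) {ε : ℝ}
    (hε : 0 < ε) :
    ∃ δ > 0, ∀ F G : Fol C β, C1Close δ F.f F.fx G.f G.fx → dalphaF α F G < ε := by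
  have hβ : 0 < β := hα.trans_lt hαβ
  have hε4 : 0 < ε / 4 := by positivity
  obtain ⟨δ₁, hδ₁, hol⟩ := exists_holDist_le hα hαβ hC hε4
  obtain ⟨δ₂, hδ₂, hol_inv⟩ := exists_holDist_le hα hαβ (K := C ^ β) (by positivity) hε4
  have hδ₃ : C ^ β * ((δ₂ / C ^ β) ^ β⁻¹) ^ β = δ₂ := by
    rw [Real.rpow_inv_rpow (by positivity) hβ.ne', mul_div_cancel₀ _ (by positivity)]
  refine ⟨min (ε / 4) (min δ₁ ((δ₂ / C ^ β) ^ β⁻¹)), by positivity, fun F G hFG => ?_⟩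
  have hFG₁ (x) (hx : x ∈ I) (y) (hy : y ∈ I) : |F.f x y - G.f x y| ≤ δ₁ :=
    (hFG x hx y hy).1.trans ((min_le_right _ _).trans (min_le_left _ _))
  have hFG₃ (x) (hx : x ∈ I) (y) (hy : y ∈ I) : |F.f x y - G.f x y| ≤ (δ₂ / C ^ β) ^ β⁻¹ :=
    (hFG x hx y hy).1.trans ((min_le_right _ _).trans (min_le_right _ _))
  have values : C0dist F.f G.f ≤ ε / 4 := C0dist_le hε4.le fun x hx y hy =>
    (hFG x hx y hy).1.trans (min_le_left _ _)
  have derivs : C0dist F.fx G.fx ≤ ε / 4 := C0dist_le hε4.le fun x hx y hy =>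
    (hFG x hx y hy).2.trans (min_le_left _ _)
  have holonomies : sSup {r | ∃ x ∈ I,
      r = max (holDist α (F.f x) (G.f x)) (holDist α (hinv F.f x) (hinv G.f x))} ≤ ε / 4 := by
    refine Real.sSup_le ?_ hε4.le
    rintro _ ⟨x, hx, rfl⟩
    exact max_le
      (hol _ _ (hFG₁ x hx) (fun _ h₁ _ h₂ => F.abs_sub_le hβ hx h₁ h₂)
        fun _ h₁ _ h₂ => G.abs_sub_le hβ hx h₁ h₂)
      (hol_inv _ _ (fun z hz => hδ₃ ▸ F.abs_hinv_sub_hinv_le hC hβ G hx hz (hFG₃ x hx))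
        (fun _ h₁ _ h₂ => F.abs_hinv_sub_le hC hβ hx h₁ h₂)
        fun _ h₁ _ h₂ => G.abs_hinv_sub_le hC hβ hx h₁ h₂)
  rw [dalphaF, dalpha]
  linarith

end Distance

end Foliations

/-! ### Approximation by piecewise affine foliations -/

theorem exists_rpow_le_rpow {p q m M : ℝ} (hpq : p < q) (hm : 0 < m) (hM : 0 < M) :
    ∃ r > 0, ∀ t, 0 < t → t ≤ r → M * t ^ q ≤ m * t ^ p := by
  have hqp : 0 < q - p := sub_pos.2 hpq
  refine ⟨(m / M) ^ (q - p)⁻¹, by positivity, fun t ht htr => ?_⟩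
  calc M * t ^ q = M * t ^ (q - p) * t ^ p := by
        rw [mul_assoc, ← Real.rpow_add ht, sub_add_cancel]
    _ ≤ M * ((m / M) ^ (q - p)⁻¹) ^ (q - p) * t ^ p := by gcongr
    _ = m * t ^ p := by
        rw [Real.rpow_inv_rpow (by positivity) hqp.ne', mul_div_cancel₀ _ hM.ne']

section Perturbation

variable {c c' l L p : ℝ}

theorem exists_incrementsGE_of_close (hl : 0 < l) (hc' : 0 < c') (hcc' : c' < c) (hp : 1 < p) :
    ∃ s > 0, ∀ g h : ℝ → ℝ, (∀ y ∈ I, |h y - g y| ≤ s) → IncrementsGE g (fun t => c * t ^ p) →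
      IncrementsGE h (fun t => l * t) → IncrementsGE h fun t => c' * t ^ p := by
  have hp0 : 0 < p := one_pos.trans hp
  obtain ⟨r, hr, hsmall⟩ := exists_rpow_le_rpow hp hl hc'
  refine ⟨(c - c') * r ^ p / 2, by have := sub_pos.2 hcc'; positivity,
    fun g h hgh hg hh y₁ h₁ y₂ h₂ hle => ?_⟩
  rcases hle.eq_or_lt with rfl | hlt
  · simp [Real.zero_rpow hp0.ne']
  rcases le_total (y₂ - y₁) r with htr | htr
  · calc c' * (y₂ - y₁) ^ p ≤ l * (y₂ - y₁) ^ (1 : ℝ) := hsmall _ (sub_pos.2 hlt) htr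
      _ = l * (y₂ - y₁) := by rw [Real.rpow_one]
      _ ≤ h y₂ - h y₁ := hh y₁ h₁ y₂ h₂ hle
  · have hgap : (c - c') * r ^ p ≤ (c - c') * (y₂ - y₁) ^ p := by
      have := sub_pos.2 hcc'
      gcongr
    linarith [hg y₁ h₁ y₂ h₂ hle, (abs_le.1 (hgh y₁ h₁)).2, (abs_le.1 (hgh y₂ h₂)).1]

theorem exists_incrementsLE_of_close (hL : 0 < L) (hc' : 0 < c') (hcc' : c < c') (hp0 : 0 < p)
    (hp : p < 1) :
    ∃ s > 0, ∀ g h : ℝ → ℝ, (∀ y ∈ I, |h y - g y| ≤ s) → IncrementsLE g (fun t => c * t ^ p) →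
      IncrementsLE h (fun t => L * t) → IncrementsLE h fun t => c' * t ^ p := by
  obtain ⟨r, hr, hsmall⟩ := exists_rpow_le_rpow hp hc' hL
  refine ⟨(c' - c) * r ^ p / 2, by have := sub_pos.2 hcc'; positivity,
    fun g h hgh hg hh y₁ h₁ y₂ h₂ hle => ?_⟩
  rcases hle.eq_or_lt with rfl | hlt
  · simp [Real.zero_rpow hp0.ne']
  rcases le_total (y₂ - y₁) r with htr | htr
  · calc h y₂ - h y₁ ≤ L * (y₂ - y₁) := hh y₁ h₁ y₂ h₂ hle
      _ = L * (y₂ - y₁) ^ (1 : ℝ) := by rw [Real.rpow_one]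
      _ ≤ c' * (y₂ - y₁) ^ p := hsmall _ (sub_pos.2 hlt) htr
  · have hgap : (c' - c) * r ^ p ≤ (c' - c) * (y₂ - y₁) ^ p := by
      have := sub_pos.2 hcc'
      gcongr
    linarith [hg y₁ h₁ y₂ h₂ hle, (abs_le.1 (hgh y₁ h₁)).1, (abs_le.1 (hgh y₂ h₂)).2]

end Perturbation

section Approximation

variable {C β : ℝ}

theorem inv_mix_le {c : ℝ} (hC : 1 < C) (hc0 : 0 ≤ c) (hc1 : c ≤ 1) :
    ((1 - c) * C + c)⁻¹ ≤ (1 - c) * C⁻¹ + c := by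
  have h := (convexOn_zpow (𝕜 := ℝ) (-1)).2 (mem_Ioi.2 (zero_lt_one.trans hC)) (mem_Ioi.2 one_pos)
    (sub_nonneg.2 hc1) hc0 (sub_add_cancel 1 c)
  simpa [zpow_neg] using h

/-- Averaging with the horizontal foliation improves both Hölder constants. -/
theorem isFol_mix (hC : 1 < C) (hβ : 0 < β) (hβ1 : β ≤ 1) (F : Fol C β) {c : ℝ} (hc0 : 0 ≤ c)
    (hc1 : c ≤ 1) :
    IsFol ((1 - c) * C + c) β (fun x y => (1 - c) * F.f x y + c * y)
      (fun x y => (1 - c) * F.fx x y) := by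
  have hC0 : 0 < C := zero_lt_one.trans hC
  have hpos : 0 < (1 - c) * C + c := by nlinarith
  refine isFol_of_increments hpos
    (fun y hy x hx => ((F.isFol.hasDeriv y hy x hx).const_mul (1 - c)).add_const _)
    (F.isFol.derivCont.const_mul _) (fun y hy => ?_) (fun x hx => ?_) (fun x hx => ?_)
    (fun x hx y₁ h₁ y₂ h₂ hle => ?_) (fun x hx y₁ h₁ y₂ h₂ hle => ?_)
  · rw [F.isFol.eq_id y hy]; ring
  · rw [F.isFol.eq_bot x hx]; ring
  · rw [F.isFol.eq_top x hx]; ring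
  all_goals
    have ht0 : 0 ≤ y₂ - y₁ := sub_nonneg.2 hle
    have ht1 : y₂ - y₁ ≤ 1 := by linarith [h₁.1, h₂.2]
  · have hlin : (y₂ - y₁) ^ (1 / β) ≤ y₂ - y₁ :=
      (Real.rpow_le_rpow_of_exponent_ge_of_imp ht0 ht1 (one_le_one_div hβ hβ1)
        fun _ h => absurd h (one_div_ne_zero hβ.ne')).trans_eq (Real.rpow_one _)
    calc ((1 - c) * C + c)⁻¹ * (y₂ - y₁) ^ (1 / β)
        ≤ ((1 - c) * C⁻¹ + c) * (y₂ - y₁) ^ (1 / β) := by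
          gcongr
          exact inv_mix_le hC hc0 hc1
      _ = (1 - c) * (C⁻¹ * (y₂ - y₁) ^ (1 / β)) + c * (y₂ - y₁) ^ (1 / β) := by ring
      _ ≤ (1 - c) * (F.f x y₂ - F.f x y₁) + c * (y₂ - y₁) := by
          gcongr
          exact F.incrementsGE hC0 hβ hx y₁ h₁ y₂ h₂ hle
      _ = _ := by ring
  · have hlin : y₂ - y₁ ≤ (y₂ - y₁) ^ β :=
      (Real.rpow_one _).symm.trans_le
        (Real.rpow_le_rpow_of_exponent_ge_of_imp ht0 ht1 hβ1 fun _ h => absurd h one_ne_zero)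
    calc _ = (1 - c) * (F.f x y₂ - F.f x y₁) + c * (y₂ - y₁) := by ring
      _ ≤ (1 - c) * (C * (y₂ - y₁) ^ β) + c * (y₂ - y₁) ^ β := by
          gcongr
          exact F.incrementsLE hβ hx y₁ h₁ y₂ h₂ hle
      _ = ((1 - c) * C + c) * (y₂ - y₁) ^ β := by ring

theorem isFol_polygonal {M : ℕ} (hM : 0 < M) (hC : 0 < C) {b bx : ℝ → ℕ → ℝ}
    (hderiv : ∀ k, ∀ x ∈ I, HasDerivWithinAt (fun x => b x k) (bx x k) I x)
    (hcont : ∀ k, ContinuousOn (fun x => bx x k) I) (hid : ∀ k ≤ M, b 0 k = k / M)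
    (hbot : ∀ x ∈ I, b x 0 = 0) (htop : ∀ x ∈ I, b x M = 1)
    (hGE : ∀ x ∈ I, IncrementsGE (polygonal M (b x)) fun t => C⁻¹ * t ^ (1 / β))
    (hLE : ∀ x ∈ I, IncrementsLE (polygonal M (b x)) fun t => C * t ^ β) :
    IsFol C β (fun x => polygonal M (b x)) (fun x => polygonal M (bx x)) := by
  refine isFol_of_increments hC
    (fun y _ x hx => hasDerivWithinAt_polygonal (fun k => hderiv k x hx) y)
    (continuousOn_polygonal I hcont) (fun y hy => ?_) (fun x hx => ?_) (fun x hx => ?_) hGE hLE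
  · obtain ⟨i, hi, s, hs, rfl⟩ := exists_cell hM hy
    rw [polygonal_cell hi hs, hid i hi.le, hid (i + 1) hi]
    push_cast
    ring
  · simpa [hbot x hx] using polygonal_node (a := b x) (Nat.zero_le M)
  · have hM' : (M : ℝ) ≠ 0 := by exact_mod_cast hM.ne'
    simpa [htop x hx, div_self hM'] using polygonal_node (a := b x) (le_refl M)

theorem convexOn_const_mul_rpow (hC : 0 < C) (hβ : 0 < β) (hβ1 : β ≤ 1) :
    ConvexOn ℝ (Ici 0) fun t : ℝ => C⁻¹ * t ^ (1 / β) :=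
  (convexOn_rpow (one_le_one_div hβ hβ1)).smul (inv_nonneg.2 hC.le)

theorem concaveOn_const_mul_rpow (hC : 0 < C) (hβ : 0 < β) (hβ1 : β ≤ 1) :
    ConcaveOn ℝ (Ici 0) fun t : ℝ => C * t ^ β :=
  (Real.concaveOn_rpow hβ.le hβ1).smul hC.le

theorem hasDerivWithinAt_sample (F : Fol C β) (N i : ℕ) {x : ℝ} (hx : x ∈ I) :
    HasDerivWithinAt (fun x => sample N (F.f x) i) (sample N (F.fx x) i) I x :=
  F.isFol.hasDeriv _ (clamp_mem _) x hx

theorem continuousOn_sample (F : Fol C β) (N i : ℕ) :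
    ContinuousOn (fun x => sample N (F.fx x) i) I :=
  F.isFol.derivCont.comp (continuous_id.prodMk continuous_const).continuousOn
    fun _ hx => ⟨hx, clamp_mem _⟩

theorem sample_at_zero (F : Fol C β) {N i : ℕ} (hi : i ≤ N) : sample N (F.f 0) i = i / N := by
  rw [sample_of_le hi, F.isFol.eq_id _ (div_mem_unitInterval_of_le hi)]

theorem isFol_polygonal_sample (hC : 0 < C) (hβ : 0 < β) (hβ1 : β ≤ 1) (F : Fol C β) {N : ℕ}
    (hN : 0 < N) :
    IsFol C β (fun x => polygonal N (sample N (F.f x)))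
      (fun x => polygonal N (sample N (F.fx x))) :=
  isFol_polygonal hN hC (fun k _ => hasDerivWithinAt_sample F N k) (continuousOn_sample F N)
    (fun _ => sample_at_zero F)
    (fun x hx => by rw [sample_zero, F.isFol.eq_bot x hx])
    (fun x hx => by rw [sample_self hN, F.isFol.eq_top x hx])
    (fun _ hx => (F.incrementsGE hC hβ hx).polygonal_sample hN
      (convexOn_const_mul_rpow hC hβ hβ1))
    (fun _ hx => (F.incrementsLE hβ hx).polygonal_sample hN
      (concaveOn_const_mul_rpow hC hβ hβ1))

theorem incrementsLE_polygonal_sample (F : Fol C β) {N : ℕ} (hN : 0 < N) {x : ℝ} (hx : x ∈ I) :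
    IncrementsLE (polygonal N (sample N (F.f x))) fun t => N * t :=
  incrementsLE_polygonal_of_succ hN fun j _ => by
    have hN' : (N : ℝ) ≠ 0 := by exact_mod_cast hN.ne'
    have hj := F.isFol.mapsTo x hx _ (clamp_mem (j / N))
    have hj' := F.isFol.mapsTo x hx _ (clamp_mem ((j + 1 : ℕ) / N))
    rw [div_self hN', sample, sample]
    linarith [hj.1, hj'.2]

theorem abs_sample_sub_le {N i : ℕ} {g : ℝ → ℝ} {y z δ ω : ℝ} (hy : y ∈ I)
    (h : ∀ y' ∈ I, |y' - y| ≤ δ → |g y' - z| ≤ ω) (hi : |i / N - y| ≤ δ) :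
    |sample N g i - z| ≤ ω :=
  h _ (clamp_mem _) ((abs_clamp_sub_le hy).trans hi)

theorem exists_nat_div_le (m : ℝ) {δ : ℝ} (hδ : 0 < δ) : ∃ N : ℕ, 0 < N ∧ m / N ≤ δ := by
  obtain ⟨n, hn⟩ := exists_nat_ge (m / δ)
  refine ⟨n + 1, n.succ_pos, (div_le_iff₀ (by positivity)).2 ?_⟩
  rw [div_le_iff₀' hδ] at hn
  push_cast
  linarith

theorem exists_polygonal_sample_C1Close (hC : 0 < C) (hβ : 0 < β) (F : Fol C β) {ε : ℝ}
    (hε : 0 < ε) :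
    ∃ N : ℕ, 0 < N ∧ C1Close ε (fun x => polygonal N (sample N (F.f x)))
      (fun x => polygonal N (sample N (F.fx x))) F.f F.fx := by
  obtain ⟨δ, hδ, hmod⟩ := F.exists_modulus hC hβ hε
  obtain ⟨N, hN, hNδ⟩ := exists_nat_div_le 1 hδ
  exact ⟨N, hN, fun x hx y hy =>
    ⟨abs_polygonal_sub_le hN hy fun k _ hk => abs_sample_sub_le hy
        (fun y' hy' h => (hmod x hx y' hy' y hy h).1) (hk.trans hNδ),
      abs_polygonal_sub_le hN hy fun k _ hk => abs_sample_sub_le hy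
        (fun y' hy' h => (hmod x hx y' hy' y hy h).2) (hk.trans hNδ)⟩⟩

theorem exists_mix_C1Close (F : Fol C β) {ε : ℝ} (hε : 0 < ε) :
    ∃ c, 0 < c ∧ c < 1 ∧ C1Close ε (fun x y => (1 - c) * F.f x y + c * y)
      (fun x y => (1 - c) * F.fx x y) F.f F.fx := by
  obtain ⟨B, hB⟩ := (isCompact_Icc.prod isCompact_Icc).exists_bound_of_continuousOn
    F.isFol.derivCont
  have hB' (x : ℝ) (hx : x ∈ I) (y : ℝ) (hy : y ∈ I) : |F.fx x y| ≤ B := hB (x, y) ⟨hx, hy⟩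
  obtain ⟨c, hc0, hc⟩ : ∃ c, 0 < c ∧ c < min 1 (ε / (1 + |B|)) :=
    exists_between (by positivity)
  have hcB : c * (1 + |B|) ≤ ε :=
    ((lt_div_iff₀ (by positivity)).1 (hc.trans_le (min_le_right _ _))).le
  refine ⟨c, hc0, hc.trans_le (min_le_left _ _), fun x hx y hy => ⟨?_, ?_⟩⟩
  · have hf := F.isFol.mapsTo x hx y hy
    have hdiff : |y - F.f x y| ≤ 1 + |B| :=
      abs_le.2 ⟨by linarith [hy.1, hf.2, abs_nonneg B], by linarith [hy.2, hf.1, abs_nonneg B]⟩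
    calc _ = c * |y - F.f x y| := by rw [← abs_of_pos hc0, ← abs_mul, abs_of_pos hc0]; ring_nf
      _ ≤ c * (1 + |B|) := by gcongr
      _ ≤ ε := hcB
  · calc _ = c * |F.fx x y| := by
          rw [← abs_of_pos hc0, ← abs_mul, abs_of_pos hc0, ← abs_neg]; ring_nf
      _ ≤ c * (1 + |B|) := by
          gcongr
          linarith [hB' x hx y hy, le_abs_self B]
      _ ≤ ε := hcB

theorem exists_biLipschitz_C1Close (hC : 1 < C) (hβ : 0 < β) (hβ1 : β ≤ 1) (F : Fol C β) {ε : ℝ}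
    (hε : 0 < ε) :
    ∃ C', 0 < C' ∧ C' < C ∧ ∃ G : Fol C' β, C1Close ε G.f G.fx F.f F.fx ∧
      ∃ l > 0, ∃ L > 0, ∀ x ∈ I,
        IncrementsGE (G.f x) (fun t => l * t) ∧ IncrementsLE (G.f x) (fun t => L * t) := by
  obtain ⟨c, hc0, hc1, hmix⟩ := exists_mix_C1Close F (half_pos hε)
  have hC0 : 0 < (1 - c) * C + c := by nlinarith
  let F' : Fol ((1 - c) * C + c) β := ⟨_, _, isFol_mix hC hβ hβ1 F hc0.le hc1.le⟩
  obtain ⟨N, hN, hpoly⟩ := exists_polygonal_sample_C1Close hC0 hβ F' (half_pos hε)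
  refine ⟨(1 - c) * C + c, hC0, by nlinarith, ⟨_, _, isFol_polygonal_sample hC0 hβ hβ1 F' hN⟩,
    add_halves ε ▸ hpoly.trans hmix, c, hc0, N, by exact_mod_cast hN, fun x hx =>
    ⟨IncrementsGE.polygonal_sample (fun y₁ h₁ y₂ h₂ hle => ?_) hN
      (LinearMap.convexOn (LinearMap.mulLeft ℝ c) (convex_Ici 0)),
      incrementsLE_polygonal_sample F' hN hx⟩⟩
  have hmono := (F.strictMonoOn (by linarith) hβ hx).monotoneOn h₁ h₂ hle
  have : 0 ≤ (1 - c) * (F.f x y₂ - F.f x y₁) :=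
    mul_nonneg (sub_nonneg.2 hc1.le) (sub_nonneg.2 hmono)
  calc c * (y₂ - y₁) ≤ (1 - c) * (F.f x y₂ - F.f x y₁) + c * (y₂ - y₁) := by linarith
    _ = F'.f x y₂ - F'.f x y₁ := by simp only [F']; ring

end Approximation

/-! ### Concentrated foliations -/

/-- The leaves of `f` through `k / (N K)`, `k ≤ N K`, bound thin strips, `K` of which make up each
of the `N` thick strips bounded by the leaves through `i / N`. For `x` in the core
`[(q + η) / K, (q + 1) / K]`, the `q`-th thin strip of every thick strip fills all but a
proportion `η` of its vertical section. -/
def IsConcentrated (N K : ℕ) (η : ℝ) (f : ℝ → ℝ → ℝ) : Prop :=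
  ∀ x ∈ I, ∀ i < N, ∀ q < K, η ≤ K * x - q → K * x - q ≤ 1 →
    (1 - η) * (f x ((i * K + K : ℕ) / (N * K : ℕ)) - f x ((i * K : ℕ) / (N * K : ℕ))) ≤
      f x ((i * K + q + 1 : ℕ) / (N * K : ℕ)) - f x ((i * K + q : ℕ) / (N * K : ℕ))

/-- Heights above `x` of the leaves through `k / (N K)` in a concentrated foliation whose leaves
through `i / N` are those of `f`. -/
def concentratedNodes (N K : ℕ) (η : ℝ) (f : ℝ → ℝ → ℝ) (x : ℝ) : ℕ → ℝ :=
  subdivide K (staircase K η x) (sample N (f x))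

/-- The derivative of `concentratedNodes N K η f` in `x`, where `fx` stands for `∂f/∂x`. -/
def concentratedNodesDeriv (N K : ℕ) (η : ℝ) (f fx : ℝ → ℝ → ℝ) (x : ℝ) (k : ℕ) : ℝ :=
  subdivide K (staircase K η x) (sample N (fx x)) k +
    (sample N (f x) (k / K + 1) - sample N (f x) (k / K)) *
      deriv (fun x => staircase K η x (k % K)) x

section Concentrated

variable {C β η : ℝ} {N K : ℕ}

theorem isConcentrated_polygonal (hK : 0 < K) (hη : 0 < η) (hη1 : η ≤ 1) {f : ℝ → ℝ → ℝ}
    (hf : ∀ x ∈ I, MonotoneOn (f x) I) :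
    IsConcentrated N K η fun x => polygonal (N * K) (concentratedNodes N K η f x) := by
  intro x hx i hi q hq h₁ h₂
  have hle : i * K + K ≤ N * K := by rw [← Nat.succ_mul]; exact Nat.mul_le_mul_right K hi
  have hnode : ∀ q ≤ K, concentratedNodes N K η f x (i * K + q) = sample N (f x) i +
      (sample N (f x) (i + 1) - sample N (f x) i) * staircase K η x q := fun q hq =>
    subdivide_mul_add hK staircase_zero (staircase_last hK) i hq
  have hmono : sample N (f x) i ≤ sample N (f x) (i + 1) :=
    hf x hx (clamp_mem _) (clamp_mem _) (monotone_clamp (by gcongr; exact i.le_succ))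
  have hbase : concentratedNodes N K η f x (i * K) = sample N (f x) i :=
    subdivide_mul hK staircase_zero i
  beta_reduce
  rw [polygonal_node hle, polygonal_node (by omega), polygonal_node (by omega),
    polygonal_node (by omega), add_assoc, hbase, hnode K le_rfl, hnode (q + 1) hq, hnode q hq.le,
    staircase_last hK]
  have core := le_staircase_succ_sub_of_core hη hη1 h₁ h₂
  linarith [mul_le_mul_of_nonneg_left core (sub_nonneg.2 hmono)]

theorem incrementsGE_polygonal_concentratedNodes (hN : 0 < N) (hK : 0 < K) (hη : 0 ≤ η)
    (hη1 : η ≤ 1) {f : ℝ → ℝ → ℝ} {x l : ℝ} (hl : 0 ≤ l) (hf : IncrementsGE (f x) fun t => l * t) :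
    IncrementsGE (polygonal (N * K) (concentratedNodes N K η f x)) fun t => η * l * t :=
  incrementsGE_polygonal_of_succ (by positivity) fun _ hk =>
    le_subdivide_succ_sub staircase_zero (staircase_last hK) hl
      (fun i hi => by
        simpa [div_eq_mul_inv] using hf.le_sample_sub (N := N) i.le_succ hi)
      hη (fun q _ => le_staircase_succ_sub hη hη1 q) hk

theorem incrementsLE_polygonal_concentratedNodes (hN : 0 < N) (hK : 0 < K) (hη : 0 ≤ η)
    (hη1 : η ≤ 1) {f : ℝ → ℝ → ℝ} {x L : ℝ} (hL : 0 ≤ L) (hf : IncrementsLE (f x) fun t => L * t) :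
    IncrementsLE (polygonal (N * K) (concentratedNodes N K η f x)) fun t => K * L * t :=
  incrementsLE_polygonal_of_succ (by positivity) fun _ hk =>
    subdivide_succ_sub_le staircase_zero (staircase_last hK) hL
      (fun i hi => by
        simpa [div_eq_mul_inv] using hf.sample_sub_le (N := N) i.le_succ hi)
      (fun q _ => (div_nonneg hη K.cast_nonneg).trans (le_staircase_succ_sub hη hη1 q))
      (fun _ hq => staircase_succ_sub_le hη hη1 hq) hk

theorem hasDerivWithinAt_concentratedNodes (F : Fol C β) (N K : ℕ) (η : ℝ) (k : ℕ) {x : ℝ}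
    (hx : x ∈ I) :
    HasDerivWithinAt (fun x => concentratedNodes N K η F.f x k)
      (concentratedNodesDeriv N K η F.f F.fx x k) I x :=
  hasDerivWithinAt_subdivide
    (fun q => ((contDiff_staircase K η q).differentiable one_ne_zero
      x).hasDerivAt.hasDerivWithinAt)
    (fun i => hasDerivWithinAt_sample F N i hx) k

theorem continuousOn_concentratedNodesDeriv (F : Fol C β) (N K : ℕ) (η : ℝ) (k : ℕ) :
    ContinuousOn (fun x => concentratedNodesDeriv N K η F.f F.fx x k) I := by
  have hΘ (q : ℕ) : ContinuousOn (fun x => staircase K η x q) I :=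
    (contDiff_staircase K η q).continuous.continuousOn
  have hΘ' (q : ℕ) : ContinuousOn (deriv fun x => staircase K η x q) I :=
    ((contDiff_staircase K η q).continuous_deriv le_rfl).continuousOn
  have hf (i : ℕ) : ContinuousOn (fun x => sample N (F.f x) i) I := fun x hx =>
    (hasDerivWithinAt_sample F N i hx).continuousWithinAt
  have hfx (i : ℕ) := continuousOn_sample F N i
  exact ((hfx _).add (((hfx _).sub (hfx _)).mul (hΘ _))).add (((hf _).sub (hf _)).mul (hΘ' _))

theorem concentratedNodes_at_zero (hN : 0 < N) (hK : 0 < K) (hη : 0 ≤ η) (F : Fol C β) {k : ℕ}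
    (hk : k ≤ N * K) : concentratedNodes N K η F.f 0 k = k / (N * K : ℕ) := by
  have hN' : (N : ℝ) ≠ 0 := mod_cast hN.ne'
  have hK' : (K : ℝ) ≠ 0 := mod_cast hK.ne'
  rcases hk.eq_or_lt with rfl | hk
  · rw [concentratedNodes, subdivide_mul hK staircase_zero, sample_at_zero F le_rfl,
      div_self hN', div_self (mod_cast (Nat.mul_pos hN hK).ne')]
  · obtain ⟨i, hi, q, hq, rfl⟩ := exists_eq_mul_add_of_lt_mul hk
    rw [concentratedNodes, subdivide_mul_add hK staircase_zero (staircase_last hK) i hq.le,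
      sample_at_zero F hi.le, sample_at_zero F hi, staircase_at_zero hη]
    push_cast
    field_simp
    ring

theorem abs_div_div_sub_le (hN : 0 < N) (hK : 0 < K) {k : ℕ} {y : ℝ}
    (hk : |k / (N * K : ℕ) - y| ≤ 1 / (N * K : ℕ)) :
    |(k / K : ℕ) / N - y| ≤ 2 / N ∧ |(k / K + 1 : ℕ) / N - y| ≤ 2 / N := by
  have hN' : (0 : ℝ) < N := mod_cast hN
  have hK' : (0 : ℝ) < K := mod_cast hK
  obtain ⟨hrem0, hrem1⟩ : (0 : ℝ) ≤ (k % K : ℕ) / K / N ∧ ((k % K : ℕ) / K / N : ℝ) ≤ 1 / N :=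
    ⟨by positivity, by gcongr; exact div_le_one_of_le₀ (mod_cast (Nat.mod_lt k hK).le) hK'.le⟩
  have hsplit : (k / (N * K : ℕ) : ℝ) = (k / K : ℕ) / N + (k % K : ℕ) / K / N := by
    have : (k : ℝ) = (k / K : ℕ) * K + (k % K : ℕ) := mod_cast (Nat.div_add_mod' k K).symm
    rw [this, Nat.cast_mul]
    field_simp
  have hmesh : (1 / (N * K : ℕ) : ℝ) ≤ 1 / N := by
    gcongr
    exact Nat.le_mul_of_pos_right N hK
  have htwo : (2 / N : ℝ) = 1 / N + 1 / N := by ring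
  rw [hsplit, abs_le] at hk
  rw [abs_le, abs_le, Nat.cast_succ, add_div, htwo]
  constructor <;> constructor <;> linarith [hk.1, hk.2]

theorem abs_polygonal_concentratedNodes_sub_le (hN : 0 < N) (hK : 0 < K) (hη : 0 ≤ η) (hη1 : η ≤ 1)
    {f fx : ℝ → ℝ → ℝ} {B ω δ : ℝ}
    (hB : ∀ x ∈ I, ∀ q ≤ K, |deriv (fun x => staircase K η x q) x| ≤ B)
    (hmod : ∀ x ∈ I, ∀ y ∈ I, ∀ y' ∈ I, |y - y'| ≤ δ →
      |f x y - f x y'| ≤ ω ∧ |fx x y - fx x y'| ≤ ω) (hNδ : 2 / N ≤ δ)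
    {x y : ℝ} (hx : x ∈ I) (hy : y ∈ I) :
    |polygonal (N * K) (concentratedNodes N K η f x) y - f x y| ≤ ω ∧
      |polygonal (N * K) (concentratedNodesDeriv N K η f fx x) y - fx x y| ≤ ω + 2 * ω * B := by
  have hΘ (k : ℕ) : staircase K η x (k % K) ∈ I := staircase_mem hη hη1 (Nat.mod_lt k hK).le
  have hf {i : ℕ} (hi : |i / N - y| ≤ 2 / N) : |sample N (f x) i - f x y| ≤ ω :=
    abs_sample_sub_le hy (fun y' hy' h => (hmod x hx y' hy' y hy h).1) (hi.trans hNδ)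
  have hfx {i : ℕ} (hi : |i / N - y| ≤ 2 / N) : |sample N (fx x) i - fx x y| ≤ ω :=
    abs_sample_sub_le hy (fun y' hy' h => (hmod x hx y' hy' y hy h).2) (hi.trans hNδ)
  refine ⟨abs_polygonal_sub_le (by positivity) hy fun k _ hk => ?_,
    abs_polygonal_sub_le (by positivity) hy fun k _ hk => ?_⟩
  all_goals obtain ⟨hi, hi'⟩ := abs_div_div_sub_le hN hK hk
  · exact abs_subdivide_sub_le (hΘ k) (hf hi) (hf hi')
  · have average := abs_subdivide_sub_le (hΘ k) (hfx hi) (hfx hi')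
    have step : |sample N (f x) (k / K + 1) - sample N (f x) (k / K)| ≤ 2 * ω :=
      (abs_sub_le _ (f x y) _).trans (by rw [abs_sub_comm (f x y)]; linarith [hf hi', hf hi])
    have weight := hB x hx (k % K) (Nat.mod_lt k hK).le
    rw [concentratedNodesDeriv, add_sub_right_comm]
    refine (abs_add_le _ _).trans (add_le_add average ?_)
    rw [abs_mul]
    exact mul_le_mul step weight (abs_nonneg _) ((abs_nonneg _).trans step)

theorem exists_isConcentrated_C1Close {C' l L ε : ℝ} (hC' : 0 < C') (hC : C' < C) (hβ : 0 < β)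
    (hβ1 : β < 1) (G : Fol C' β) (hl : 0 < l) (hL : 0 < L)
    (hG : ∀ x ∈ I, IncrementsGE (G.f x) (fun t => l * t) ∧ IncrementsLE (G.f x) (fun t => L * t))
    (hK : 0 < K) (hη : 0 < η) (hη1 : η ≤ 1) (hε : 0 < ε) :
    ∃ F : Fol C β, C1Close ε F.f F.fx G.f G.fx ∧ ∃ N, 0 < N ∧ IsConcentrated N K η F.f := by
  have hC0 : 0 < C := hC'.trans hC
  obtain ⟨s₁, hs₁, hGE⟩ := exists_incrementsGE_of_close (mul_pos hη hl) (inv_pos.2 hC0)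
    (inv_strictAnti₀ hC' hC) ((one_lt_div hβ).2 hβ1)
  obtain ⟨s₂, hs₂, hLE⟩ := exists_incrementsLE_of_close (mul_pos (Nat.cast_pos.2 hK) hL) hC0
    hC hβ hβ1
  obtain ⟨B, hB⟩ := exists_abs_deriv_staircase_le K η
  have hB0 : 0 ≤ B := (abs_nonneg _).trans (hB 0 ⟨le_rfl, zero_le_one⟩ 0 K.zero_le)
  obtain ⟨ω, hω, hωs, hωε⟩ : ∃ ω, 0 < ω ∧ ω ≤ min s₁ s₂ ∧ ω * (1 + 2 * B) ≤ ε :=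
    ⟨min (min s₁ s₂) (ε / (1 + 2 * B)), by positivity, min_le_left _ _,
      (le_div_iff₀ (by positivity)).1 (min_le_right _ _)⟩
  obtain ⟨δ, hδ, hmod⟩ := G.exists_modulus hC' hβ hω
  obtain ⟨N, hN, hNδ⟩ := exists_nat_div_le 2 hδ
  have close (x) (hx : x ∈ I) (y) (hy : y ∈ I) :=
    abs_polygonal_concentratedNodes_sub_le hN hK hη.le hη1 hB hmod hNδ hx hy
  have fol : IsFol C β (fun x => polygonal (N * K) (concentratedNodes N K η G.f x))
      (fun x => polygonal (N * K) (concentratedNodesDeriv N K η G.f G.fx x)) := by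
    refine isFol_polygonal (by positivity) hC0
      (fun k x hx => hasDerivWithinAt_concentratedNodes G N K η k hx)
      (continuousOn_concentratedNodesDeriv G N K η) (fun k hk => ?_) (fun x hx => ?_)
      (fun x hx => ?_) (fun x hx => ?_) (fun x hx => ?_)
    · exact concentratedNodes_at_zero hN hK hη.le G hk
    · rw [concentratedNodes, ← zero_mul K, subdivide_mul hK staircase_zero, sample_zero,
        G.isFol.eq_bot x hx]
    · rw [concentratedNodes, subdivide_mul hK staircase_zero, sample_self hN,
        G.isFol.eq_top x hx]
    · exact hGE (G.f x) _ (fun y hy => (close x hx y hy).1.trans (hωs.trans (min_le_left _ _)))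
        (G.incrementsGE hC' hβ hx)
        (incrementsGE_polygonal_concentratedNodes hN hK hη.le hη1 hl.le (hG x hx).1)
    · exact hLE (G.f x) _ (fun y hy => (close x hx y hy).1.trans (hωs.trans (min_le_right _ _)))
        (G.incrementsLE hβ hx)
        (incrementsLE_polygonal_concentratedNodes hN hK hη.le hη1 hL.le (hG x hx).2)
  refine ⟨⟨_, _, fol⟩, fun x hx y hy => ?_, N, hN, isConcentrated_polygonal hK hη hη1
    fun x hx => (G.strictMonoOn hC' hβ hx).monotoneOn⟩
  have hωB : 0 ≤ ω * B := by positivity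
  exact ⟨(close x hx y hy).1.trans (by linarith), (close x hx y hy).2.trans (by linarith)⟩

end Concentrated

/-! ### Nearly singular foliations -/

/-- Foliations for which some set carries all but `ρ` of the area of the square although every leaf
spends at most time `ρ` vertically within `δ` of it. The margin `δ` makes the condition open. -/
def NearlySingular (C β ρ : ℝ) : Set (Fol C β) :=
  {F | ∃ E : Set (ℝ × ℝ), MeasurableSet E ∧ ∃ δ > 0, muM Eᶜ ≤ ENNReal.ofReal ρ ∧
    ∀ y ∈ I, volume {x | x ∈ I ∧ ∃ z, |z - F.f x y| ≤ δ ∧ (x, z) ∈ E} ≤ ENNReal.ofReal ρ}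

section NearlySingular

variable {C β : ℝ}

theorem isOpenWrt_nearlySingular (C β α ρ : ℝ) :
    IsOpenWrt (dalphaF α) (NearlySingular C β ρ) := by
  rintro F ⟨E, hE, δ, hδ, harea, hleaf⟩
  refine ⟨δ / 2, half_pos hδ, fun G hG => ⟨E, hE, δ / 2, half_pos hδ, harea, fun y hy => ?_⟩⟩
  refine (measure_mono ?_).trans (hleaf y hy)
  rintro x ⟨hx, z, hz, hxz⟩
  have hGF : |G.f x y - F.f x y| ≤ δ / 2 := (abs_sub_le_dalphaF α G F hx hy).trans hG.le
  exact ⟨hx, z, (abs_sub_le z (G.f x y) (F.f x y)).trans (by linarith), hxz⟩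

theorem tsum_ofReal_half_pow_ne_top : ∑' n : ℕ, ENNReal.ofReal ((1 / 2) ^ n) ≠ ∞ := by
  rw [← ENNReal.ofReal_tsum_of_nonneg (fun n => by positivity) summable_geometric_two]
  exact ENNReal.ofReal_ne_top

variable {F : Fol C β} {ν : ℝ → Measure (ℝ × ℝ)}

theorem IsDisint.ae_eq_zero (hν : IsDisint F ν) {S : Set (ℝ × ℝ)} (hS : MeasurableSet S)
    (h : muM S = 0) : ∀ᵐ y ∂quotM F, ν y S = 0 :=
  (lintegral_eq_zero_iff (hν.2.1 S hS)).1 (by rw [← hν.2.2.2 S hS, h])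

theorem IsDisint.quotM_ne_zero (hν : IsDisint F ν) : quotM F ≠ 0 := by
  intro h0
  have harea := hν.2.2.2 univ MeasurableSet.univ
  rw [h0, lintegral_zero_measure, muM, MSq, Measure.restrict_apply_univ, Measure.volume_eq_prod,
    Measure.prod_prod] at harea
  simp [unitInterval] at harea

theorem ae_quotM_mem_unitInterval (hβ : 0 < β) (F : Fol C β) : ∀ᵐ y ∂quotM F, y ∈ I := by
  by_cases hm : AEMeasurable (projF F.f) muM
  · refine (ae_map_iff hm (p := fun y => y ∈ I) measurableSet_Icc).2 ?_
    filter_upwards [ae_restrict_mem (measurableSet_Icc.prod measurableSet_Icc)] with p hp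
    exact F.hinv_mem hβ hp.1 hp.2
  · simp [quotM, Measure.map_of_not_aemeasurable hm]

theorem leafMeas_eq_zero {y : ℝ} {S : Set (ℝ × ℝ)} (hS : MeasurableSet S)
    (h : volume {x | x ∈ I ∧ (x, F.f x y) ∈ S} = 0) : leafMeas F y S = 0 := by
  by_cases hm : AEMeasurable (fun x => (x, F.f x y)) (volume.restrict I)
  · rw [leafMeas, Measure.map_apply_of_aemeasurable hm hS,
      Measure.restrict_apply' measurableSet_Icc, inter_comm]
    exact h
  · simp [leafMeas, Measure.map_of_not_aemeasurable hm]

theorem ae_mutuallySingular_of_forall_mem_nearlySingular (hβ : 0 < β)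
    (hF : ∀ n : ℕ, F ∈ NearlySingular C β ((1 / 2) ^ n)) (hν : IsDisint F ν) :
    ∀ᵐ y ∂quotM F, (ν y).MutuallySingular (leafMeas F y) := by
  choose E hE δ hδ harea hleaf using hF
  set S : Set (ℝ × ℝ) := limsup (fun n => (E n)ᶜ) atTop with hS
  have hSm : MeasurableSet S := .measurableSet_limsup fun n => (hE n).compl
  have hS0 : muM S = 0 := measure_limsup_atTop_eq_zero
    (ne_top_of_le_ne_top tsum_ofReal_half_pow_ne_top (ENNReal.tsum_le_tsum harea))
  filter_upwards [hν.ae_eq_zero hSm hS0, ae_quotM_mem_unitInterval hβ F] with y hνS hy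
  refine ⟨S, hSm, hνS, leafMeas_eq_zero hSm.compl (measure_mono_null ?_
    (measure_liminf_atTop_eq_zero (ne_top_of_le_ne_top tsum_ofReal_half_pow_ne_top
      (ENNReal.tsum_le_tsum fun n => hleaf n y hy))))⟩
  rintro x ⟨hx, hxS⟩
  rw [mem_compl_iff, hS, mem_limsup_iff_frequently_mem, not_frequently] at hxS
  refine mem_liminf_iff_eventually_mem.2 (hxS.mono fun n hn => ⟨hx, F.f x y, ?_, not_not.1 hn⟩)
  simpa using (hδ n).le

end NearlySingular

/-! ### Concentrated foliations are nearly singular -/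

section Area

variable {c s t : ℕ → ℝ} {N : ℕ}

theorem volume_Icc_diff_iUnion_Ioo_le_sum (hs : ∀ i < N, c i ≤ s i)
    (ht : ∀ i < N, t i ≤ c (i + 1)) :
    volume (Icc (c 0) (c N) \ ⋃ i < N, Ioo (s i) (t i)) ≤
      ENNReal.ofReal (∑ i ∈ Finset.range N, ((s i - c i) + (c (i + 1) - t i))) := by
  induction N with
  | zero => simp
  | succ N ih =>
    have hs' : ∀ i < N, c i ≤ s i := fun i hi => hs i (hi.trans N.lt_succ_self)
    have ht' : ∀ i < N, t i ≤ c (i + 1) := fun i hi => ht i (hi.trans N.lt_succ_self)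
    have cover : Icc (c 0) (c (N + 1)) \ ⋃ i < N + 1, Ioo (s i) (t i) ⊆
        (Icc (c 0) (c N) \ ⋃ i < N, Ioo (s i) (t i)) ∪
          (Icc (c N) (s N) ∪ Icc (t N) (c (N + 1))) := by
      rintro z ⟨hz, hzU⟩
      simp only [mem_iUnion, not_exists] at hzU
      rcases Icc_subset_Icc_union_Icc (b := c N) hz with hz | hz
      · refine .inl ⟨hz, ?_⟩
        simpa only [mem_iUnion, not_exists] using fun i hi => hzU i (hi.trans N.lt_succ_self)
      · rcases le_or_gt z (s N) with h | h
        · exact .inr (.inl ⟨hz.1, h⟩)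
        · exact .inr (.inr ⟨not_lt.1 fun h' => hzU N N.lt_succ_self ⟨h, h'⟩, hz.2⟩)
    refine (measure_mono cover).trans ((measure_union_le _ _).trans
      ((add_le_add (ih hs' ht') (measure_union_le _ _)).trans_eq ?_))
    have hsN := sub_nonneg.2 (hs N N.lt_succ_self)
    have htN := sub_nonneg.2 (ht N N.lt_succ_self)
    rw [Real.volume_Icc, Real.volume_Icc, ← ENNReal.ofReal_add hsN htN,
      ← ENNReal.ofReal_add (Finset.sum_nonneg fun i hi => ?_) (add_nonneg hsN htN),
      Finset.sum_range_succ]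
    have hi := Finset.mem_range.1 hi
    exact add_nonneg (sub_nonneg.2 (hs' i hi)) (sub_nonneg.2 (ht' i hi))

theorem volume_Icc_diff_iUnion_Ioo_le {η ε : ℝ} (hs : ∀ i < N, c i ≤ s i)
    (ht : ∀ i < N, t i ≤ c (i + 1))
    (h : ∀ i < N, (1 - η) * (c (i + 1) - c i) ≤ t i - s i + ε) :
    volume (Icc (c 0) (c N) \ ⋃ i < N, Ioo (s i) (t i)) ≤
      ENNReal.ofReal (η * (c N - c 0) + N * ε) := by
  refine (volume_Icc_diff_iUnion_Ioo_le_sum hs ht).trans (ENNReal.ofReal_le_ofReal ?_)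
  calc ∑ i ∈ Finset.range N, ((s i - c i) + (c (i + 1) - t i))
      ≤ ∑ i ∈ Finset.range N, (η * (c (i + 1) - c i) + ε) :=
        Finset.sum_le_sum fun i hi => by linarith [h i (Finset.mem_range.1 hi)]
    _ = η * (c N - c 0) + N * ε := by
        rw [Finset.sum_add_distrib, ← Finset.mul_sum, Finset.sum_range_sub, Finset.sum_const,
          Finset.card_range, nsmul_eq_mul]

theorem muM_le_add {S : Set (ℝ × ℝ)} {D : Set ℝ} (hS : MeasurableSet S) (hD : MeasurableSet D)
    {a b : ℝ≥0∞} (ha : volume D ≤ a) (hb : ∀ x ∈ I, x ∉ D → volume (I ∩ Prod.mk x ⁻¹' S) ≤ b) :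
    muM S ≤ a + b := by
  have hmu : muM = (volume.restrict I).prod (volume.restrict I) := by
    rw [muM, MSq, Measure.volume_eq_prod, Measure.prod_restrict]
  have fibre (x) (hx : x ∈ I) :
      volume.restrict I (Prod.mk x ⁻¹' S) ≤ D.indicator 1 x + b := by
    rw [Measure.restrict_apply' measurableSet_Icc, inter_comm]
    by_cases hxD : x ∈ D
    · rw [indicator_of_mem hxD]
      refine (measure_mono inter_subset_left).trans (le_add_right ?_)
      simp
    · exact (hb x hx hxD).trans (le_add_left le_rfl)
  rw [hmu, Measure.prod_apply hS]
  calc ∫⁻ x in I, volume.restrict I (Prod.mk x ⁻¹' S)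
      ≤ ∫⁻ x in I, (D.indicator 1 x + b) := setLIntegral_mono' measurableSet_Icc fibre
    _ = volume.restrict I D + b := by
        rw [lintegral_add_right _ measurable_const, lintegral_indicator_one hD, lintegral_const,
          Measure.restrict_apply_univ]
        simp [unitInterval]
    _ ≤ a + b := by
        gcongr
        exact (Measure.restrict_apply_le _ _).trans ha

end Area

/-- The part of the `k`-th thin strip of a concentrated foliation that lies over its core and at
vertical distance more than `δ` from the bounding leaves. Clamping `x` only serves measurability,
as `f` is uncontrolled off `[0, 1]`. -/
def thinStrip (N K : ℕ) (η δ : ℝ) (f : ℝ → ℝ → ℝ) (k : ℕ) : Set (ℝ × ℝ) :=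
  regionBetween (fun x => f (clamp x) (k / (N * K : ℕ)) + δ)
    (fun x => f (clamp x) ((k + 1 : ℕ) / (N * K : ℕ)) - δ)
    (Ioo (((k % K : ℕ) + η) / K) (((k % K : ℕ) + 1) / K))

section ThinStrip

variable {C β η δ : ℝ} {N K : ℕ}

theorem mem_thinStrip {f : ℝ → ℝ → ℝ} {k : ℕ} {x z : ℝ} (hx : x ∈ I) :
    (x, z) ∈ thinStrip N K η δ f k ↔ x ∈ Ioo (((k % K : ℕ) + η) / K) (((k % K : ℕ) + 1) / K) ∧
      z ∈ Ioo (f x (k / (N * K : ℕ)) + δ) (f x ((k + 1 : ℕ) / (N * K : ℕ)) - δ) := by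
  simp only [thinStrip, regionBetween, mem_ofPred_eq, clamp_of_mem hx]

theorem measurableSet_iUnion_thinStrip (F : Fol C β) (N K : ℕ) (η δ : ℝ) :
    MeasurableSet (⋃ k < N * K, thinStrip N K η δ F.f k) := by
  have leaf {y : ℝ} (hy : y ∈ I) : Measurable fun x => F.f (clamp x) y :=
    (ContinuousOn.comp_continuous (g := fun x => F.f x y)
      (fun x hx => (F.isFol.hasDeriv y hy x hx).continuousWithinAt) continuous_clamp
      clamp_mem).measurable
  exact MeasurableSet.iUnion fun k => MeasurableSet.iUnion fun hk => measurableSet_regionBetween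
    ((leaf (div_mem_unitInterval_of_le hk.le)).add_const δ)
    ((leaf (div_mem_unitInterval_of_le hk)).sub_const δ) measurableSet_Ioo

theorem volume_unitInterval_diff_iUnion_Ioo_le (hK : 0 < K) (hη : 0 ≤ η) :
    volume (I \ ⋃ q < K, Ioo ((q + η) / K : ℝ) ((q + 1) / K)) ≤ ENNReal.ofReal η := by
  have hK' : (K : ℝ) ≠ 0 := mod_cast hK.ne'
  have := volume_Icc_diff_iUnion_Ioo_le (N := K) (c := fun q => q / K) (η := η) (ε := 0)
    (s := fun q => (q + η) / K) (t := fun q => (q + 1) / K) (fun q _ => by gcongr; linarith)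
    (fun q _ => by push_cast; rfl) (fun q _ => by push_cast; apply le_of_eq; ring)
  simpa [div_self hK', unitInterval] using this

theorem IsConcentrated.volume_fibre_le (hC : 0 < C) (hβ : 0 < β) {F : Fol C β}
    (hF : IsConcentrated N K η F.f) (hN : 0 < N) (hδ : 0 ≤ δ) {x : ℝ} (hx : x ∈ I) {q : ℕ}
    (hq : q < K) (hxq : x ∈ Ioo ((q + η) / K : ℝ) ((q + 1) / K)) :
    volume (I ∩ Prod.mk x ⁻¹' (⋃ k < N * K, thinStrip N K η δ F.f k)ᶜ) ≤
      ENNReal.ofReal (η + N * (2 * δ)) := by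
  have hK : 0 < K := q.zero_le.trans_lt hq
  have hK' : (0 : ℝ) < K := mod_cast hK
  have hNK : ((N * K : ℕ) : ℝ) ≠ 0 := mod_cast (Nat.mul_pos hN hK).ne'
  have hthick {i : ℕ} (hi : i < N) : (i + 1) * K ≤ N * K := Nat.mul_le_mul_right K hi
  have hthin {i : ℕ} (hi : i < N) : i * K + q < N * K := by linarith [hthick hi]
  have hmono {k m : ℕ} (hkm : k ≤ m) (hm : m ≤ N * K) :
      F.f x (k / (N * K : ℕ)) ≤ F.f x (m / (N * K : ℕ)) :=
    (F.strictMonoOn hC hβ hx).monotoneOn (div_mem_unitInterval_of_le (hkm.trans hm))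
      (div_mem_unitInterval_of_le hm) (by gcongr)
  obtain ⟨hcore₁, hcore₂⟩ : η ≤ K * x - q ∧ K * x - q ≤ 1 := by
    rw [mem_Ioo, div_lt_iff₀ hK', lt_div_iff₀ hK'] at hxq
    constructor <;> linarith [hxq.1, hxq.2]
  have gaps := volume_Icc_diff_iUnion_Ioo_le (N := N) (η := η) (ε := 2 * δ)
    (c := fun i => F.f x ((i * K : ℕ) / (N * K : ℕ)))
    (s := fun i => F.f x ((i * K + q : ℕ) / (N * K : ℕ)) + δ)
    (t := fun i => F.f x ((i * K + q + 1 : ℕ) / (N * K : ℕ)) - δ)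
    (fun i hi => (hmono (Nat.le_add_right _ _) (hthin hi).le).trans (le_add_of_nonneg_right hδ))
    (fun i hi => (sub_le_self _ hδ).trans (hmono (by linarith) (by linarith [hthick hi])))
    (fun i hi => by
      rw [Nat.succ_mul]
      linarith [hF x hx i hi q hq hcore₁ hcore₂])
  rw [zero_mul, Nat.cast_zero, zero_div, div_self hNK, F.isFol.eq_bot x hx, F.isFol.eq_top x hx,
    sub_zero, mul_one] at gaps
  refine (measure_mono ?_).trans gaps
  refine inter_subset_inter_right _ (compl_subset_compl.2 (iUnion₂_subset fun i hi z hz => ?_))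
  refine mem_iUnion₂.2 ⟨i * K + q, hthin hi, ?_⟩
  rw [mem_thinStrip hx, Nat.mul_add_mod', Nat.mod_eq_of_lt hq]
  exact ⟨hxq, hz⟩

theorem IsConcentrated.muM_compl_iUnion_thinStrip_le (hC : 0 < C) (hβ : 0 < β) {F : Fol C β}
    (hF : IsConcentrated N K η F.f) (hN : 0 < N) (hK : 0 < K) (hη : 0 ≤ η) (hδ : 0 ≤ δ) :
    muM (⋃ k < N * K, thinStrip N K η δ F.f k)ᶜ ≤
      ENNReal.ofReal η + ENNReal.ofReal (η + N * (2 * δ)) := by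
  refine muM_le_add (measurableSet_iUnion_thinStrip F N K η δ).compl
    (measurableSet_Icc.diff (.iUnion fun _ => .iUnion fun _ => measurableSet_Ioo))
    (volume_unitInterval_diff_iUnion_Ioo_le hK hη) fun x hx hxD => ?_
  obtain ⟨q, hq, hxq⟩ : ∃ q < K, x ∈ Ioo ((q + η) / K : ℝ) ((q + 1) / K) := by
    by_contra! h
    exact hxD ⟨hx, by simpa only [mem_iUnion, not_exists] using h⟩
  exact hF.volume_fibre_le hC hβ hN hδ hx hq hxq

theorem eq_floor_of_mem_thinStrip (hC : 0 < C) (hβ : 0 < β) (F : Fol C β) {k : ℕ}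
    (hk : k < N * K) {x y z : ℝ} (hx : x ∈ I) (hy : y ∈ I) (hz : |z - F.f x y| ≤ δ)
    (hxz : (x, z) ∈ thinStrip N K η δ F.f k) : k = ⌊(N * K : ℕ) * y⌋₊ := by
  have hNK : (0 : ℝ) < (N * K : ℕ) := mod_cast k.zero_le.trans_lt hk
  obtain ⟨-, hlow, hhigh⟩ := (mem_thinStrip hx).1 hxz
  rw [abs_le] at hz
  have mono := F.strictMonoOn hC hβ hx
  have hky : (k / (N * K : ℕ) : ℝ) < y :=
    (mono.lt_iff_lt (div_mem_unitInterval_of_le hk.le) hy).1 (by linarith)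
  have hyk : y < (k + 1 : ℕ) / (N * K : ℕ) :=
    (mono.lt_iff_lt hy (div_mem_unitInterval_of_le hk)).1 (by linarith)
  rw [div_lt_iff₀' hNK] at hky
  rw [lt_div_iff₀' hNK, Nat.cast_succ] at hyk
  exact ((Nat.floor_eq_iff (by linarith [k.cast_nonneg (α := ℝ)])).2 ⟨hky.le, hyk⟩).symm

theorem volume_near_iUnion_thinStrip_le (hC : 0 < C) (hβ : 0 < β) (F : Fol C β) (hη : 0 ≤ η)
    {y : ℝ} (hy : y ∈ I) :
    volume {x | x ∈ I ∧ ∃ z, |z - F.f x y| ≤ δ ∧ (x, z) ∈ ⋃ k < N * K, thinStrip N K η δ F.f k} ≤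
      ENNReal.ofReal (1 / K) := by
  set q := ⌊(N * K : ℕ) * y⌋₊ % K
  have strip : {x | x ∈ I ∧ ∃ z, |z - F.f x y| ≤ δ ∧
      (x, z) ∈ ⋃ k < N * K, thinStrip N K η δ F.f k} ⊆ Ioo ((q + η) / K : ℝ) ((q + 1) / K) := by
    rintro x ⟨hx, z, hz, hxz⟩
    obtain ⟨k, hk, hxz⟩ := mem_iUnion₂.1 hxz
    obtain rfl := eq_floor_of_mem_thinStrip hC hβ F hk hx hy hz hxz
    exact ((mem_thinStrip hx).1 hxz).1
  refine (measure_mono strip).trans ?_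
  rw [Real.volume_Ioo, ← sub_div]
  gcongr
  linarith

theorem IsConcentrated.mem_nearlySingular (hC : 0 < C) (hβ : 0 < β) {F : Fol C β}
    (hF : IsConcentrated N K η F.f) (hN : 0 < N) (hK : 0 < K) (hη : 0 < η) {ρ : ℝ}
    (hηρ : 3 * η ≤ ρ) (hKρ : 1 / K ≤ ρ) : F ∈ NearlySingular C β ρ := by
  refine ⟨_, measurableSet_iUnion_thinStrip F N K η (η / (2 * N)), η / (2 * N), by positivity, ?_,
    fun y hy => (volume_near_iUnion_thinStrip_le hC hβ F hη.le hy).trans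
      (ENNReal.ofReal_le_ofReal hKρ)⟩
  refine (hF.muM_compl_iUnion_thinStrip_le hC hβ hN hK hη.le (by positivity)).trans ?_
  rw [← ENNReal.ofReal_add hη.le (by positivity)]
  refine ENNReal.ofReal_le_ofReal (le_of_eq_of_le ?_ hηρ)
  field_simp
  ring

end ThinStrip

theorem isDenseWrt_nearlySingular {C β α ρ : ℝ} (hC : 1 < C) (hα : 0 ≤ α) (hαβ : α < β)
    (hβ : β < 1) (hρ : 0 < ρ) : IsDenseWrt (dalphaF α) (NearlySingular C β ρ) := by
  intro F ε hε
  have hC0 : 0 < C := zero_lt_one.trans hC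
  have hβ0 : 0 < β := hα.trans_lt hαβ
  obtain ⟨δ, hδ, close⟩ := exists_dalphaF_lt_of_C1Close hC0 hα hαβ hε
  obtain ⟨K, hK, hKρ⟩ := exists_nat_div_le 1 hρ
  obtain ⟨η, hη, hη1, hηρ⟩ : ∃ η : ℝ, 0 < η ∧ η ≤ 1 ∧ 3 * η ≤ ρ :=
    ⟨min 1 (ρ / 3), by positivity, min_le_left _ _, by linarith [min_le_right 1 (ρ / 3)]⟩
  obtain ⟨C', hC', hC'C, G, hGF, l, hl, L, hL, hG⟩ :=
    exists_biLipschitz_C1Close hC hβ0 hβ.le F (half_pos hδ)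
  obtain ⟨H, hHG, N, hN, hH⟩ :=
    exists_isConcentrated_C1Close hC' hC'C hβ0 hβ G hl hL hG hK hη hη1 (half_pos hδ)
  exact ⟨H, hH.mem_nearlySingular hC0 hβ0 hN hK hη hηρ hKρ,
    close H F (by simpa using hHG.trans hGF)⟩

end

/-- There is a residual subset `R` of `(F_(C,β), d_α)` such that for every
`f ∈ R`, for `μ̂`-almost every `y` the conditional measure `μ_y` is mutually singular with the
leaf measure `λ_y`; in particular it is not the case that `μ_y ≪ λ_y` for `μ̂`-a.e. `y`, so the
foliation is not leafwise absolutely continuous. -/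
theorem stmt1 (C β α : ℝ) (hC : 1 < C) (hα : 0 ≤ α) (hαβ : α < β) (hβ : β < 1) :
    ∃ R : Set (Fol C β),
      (∃ G : ℕ → Set (Fol C β),
        (∀ n, IsOpenWrt (dalphaF α) (G n) ∧ IsDenseWrt (dalphaF α) (G n)) ∧
        (⋂ n, G n) ⊆ R) ∧
      ∀ F ∈ R, ∀ ν : ℝ → Measure (ℝ × ℝ), IsDisint F ν →
        (∀ᵐ y ∂quotM F, (ν y).MutuallySingular (leafMeas F y)) ∧
        ¬ (∀ᵐ y ∂quotM F, ν y ≪ leafMeas F y) := by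
  have hβ0 : 0 < β := hα.trans_lt hαβ
  refine ⟨⋂ n : ℕ, NearlySingular C β ((1 / 2) ^ n), ⟨fun n => NearlySingular C β ((1 / 2) ^ n),
    fun n => ⟨isOpenWrt_nearlySingular C β α _,
      isDenseWrt_nearlySingular hC hα hαβ hβ (by positivity)⟩, Subset.rfl⟩, fun F hF ν hν => ?_⟩
  have sing : ∀ᵐ y ∂quotM F, (ν y).MutuallySingular (leafMeas F y) :=
    ae_mutuallySingular_of_forall_mem_nearlySingular hβ0 (mem_iInter.1 hF) hν
  refine ⟨sing, fun hac => hν.quotM_ne_zero ?_⟩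
  have absurd : ∀ᵐ _ ∂quotM F, False := by
    filter_upwards [sing, hac] with y hsing hac
    have := hν.1 y
    exact IsProbabilityMeasure.ne_zero (ν y)
      (Measure.eq_zero_of_absolutelyContinuous_of_mutuallySingular hac hsing)
  exact ae_eq_bot.1 (eventually_false_iff_eq_bot.1 absurd)

end
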